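/- arXiv:2305.07277 — 2 statements merged into one kernel-verified Lean document; each statement's English description precedes it below -/
import Mathlib

section
/- There exists a constant c > 0 such that for every R₀ > 1 there is some R ≥ R₀ with |E*(R)| ≥ c · R · √(log R); that is, E*(R) = Ω(R √(log R)). -/
open Real MeasureTheory

/-- Number of visible lattice points (coprime coordinates) in the ball of radius `R`. -/
noncomputable def Nstar (R : ℝ) : ℕ :=
  Set.ncard {v : ℤ × ℤ × ℤ | v ≠ 0 ∧
    Int.gcd (Int.gcd v.1 v.2.1 : ℤ) v.2.2 = 1 ∧
    (v.1 : ℝ)^2 + (v.2.1 : ℝ)^2 + (v.2.2 : ℝ)^2 ≤ R^2}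

/-- The error term `E*(R) = 𝒩*(R) − (4π/(3ζ(3))) R³`. -/
noncomputable def Estar (R : ℝ) : ℝ :=
  (Nstar R : ℝ) - (4 * π / (3 * (riemannZeta 3).re)) * R^3

/-!
Let `q` be squarefree and coprime to `16!`. Evaluating Gauss sums and removing the coprimality
condition by Möbius inversion, the sum of `e(|v|² / q)` over the visible points `v` of norm at most
`R` has size at least a constant times `q ^ (-3 / 2) * R ^ 3`; excluding small prime factors makes
the term `d = 1` of the Möbius sum dominate, as `1 / 4 + 2 / √16 < 1`. By partial summation over
the values of `|v|²`, in which `D * R ^ 3` contributes little whatever `D` is, the errors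
`E(√n) = 𝒩*(√n) - D * n ^ (3 / 2)`, `n < X`, then correlate with `e(n / q)` to the extent
`q ^ (-1 / 2) * X ^ (3 / 2)`. As the characters `n ↦ e(n / q)` for different `q` are nearly
orthogonal, the Halász–Montgomery duality inequality adds up these correlations:
`∑ E(√n) ^ 2` is at least a constant times `X ^ 2 * ∑ 1 / q`, that is `X ^ 2 * log X`.
-/

open Filter Finset
open scoped BigOperators ComplexConjugate FourierTransform

section GaussSum

lemma sq_norm_sum_addChar_mul_sq {A : Type*} [CommRing A] [Fintype A] [DecidableEq A]
    {ψ : AddChar A ℂ} (hψ : ψ.IsPrimitive) (h2 : IsUnit (2 : A)) (a : A) :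
    ‖∑ x, ψ (a * x ^ 2)‖ ^ 2 = Fintype.card A * #{t : A | a * t = 0} := by
  have shift (y : A) : ∑ x, ψ (a * x ^ 2) * conj (ψ (a * y ^ 2)) =
      ∑ t, ψ (a * t ^ 2) * ψ (y * (2 * (a * t))) := by
    rw [← Equiv.sum_comp (Equiv.addRight y)]
    refine sum_congr rfl fun t _ ↦ ?_
    rw [Equiv.coe_addRight, ← AddChar.map_neg_eq_conj, ← AddChar.map_add_eq_mul,
      ← AddChar.map_add_eq_mul]
    congr 1
    ring
  have diagonal (t : A) : ψ (a * t ^ 2) * ∑ y, ψ (y * (2 * (a * t))) =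
      if a * t = 0 then (Fintype.card A : ℂ) else 0 := by
    simp only [AddChar.sum_mulShift _ hψ, h2.mul_right_eq_zero]
    split_ifs with ht
    · simp [sq, ← mul_assoc, ht]
    · simp
  have key : (∑ x, ψ (a * x ^ 2)) * conj (∑ x, ψ (a * x ^ 2)) =
      Fintype.card A * #{t : A | a * t = 0} := by
    rw [map_sum, sum_mul_sum, sum_comm]
    simp_rw [shift]
    rw [sum_comm]
    simp_rw [← mul_sum, diagonal, ← sum_filter, sum_const, nsmul_eq_mul, mul_comm]
  rw [Complex.mul_conj'] at key
  exact_mod_cast key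

lemma card_zmod_mul_eq_zero (q : ℕ) [NeZero q] (d : ℕ) :
    #{t : ZMod q | d * t = 0} = q.gcd d := by
  have hker := IsAddCyclic.card_nsmulAddMonoidHom_ker (G := ZMod q) d
  rw [Nat.card_zmod] at hker
  rw [← hker, ← SetLike.coe_sort_coe, Nat.card_coe_set_eq, ← Set.ncard_coe_finset]
  congr 1
  ext t
  simp

/-- The normalized quadratic Gauss sum `𝔼ₓ e(d²x²/q)`. -/
noncomputable def gaussMean (q : ℕ) [NeZero q] (d : ℕ) : ℂ :=
  𝔼 x : ZMod q, ZMod.stdAddChar ((d : ZMod q) ^ 2 * x ^ 2)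

lemma norm_gaussMean_le_one (q : ℕ) [NeZero q] (d : ℕ) : ‖gaussMean q d‖ ≤ 1 :=
  (RCLike.norm_expect_le (K := ℂ)).trans
    (expect_le univ_nonempty fun _ _ ↦ (AddChar.norm_apply _ _).le)

lemma norm_gaussMean {q : ℕ} [NeZero q] (hq : Squarefree q)
    (h2 : IsUnit (2 : ZMod q)) (d : ℕ) :
    ‖gaussMean q d‖ = √(q.gcd d / q) := by
  have : IsReduced (ZMod q) := isReduced_zmod.2 (.inl hq)
  have hker (t : ZMod q) : (d : ZMod q) ^ 2 * t = 0 ↔ d * t = 0 := by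
    refine ⟨fun h ↦ ?_, fun h ↦ by rw [sq, mul_assoc, h, mul_zero]⟩
    rw [← sq_eq_zero_iff, mul_pow, sq t, ← mul_assoc, h, zero_mul]
  have hq0 : (q : ℝ) ≠ 0 := Nat.cast_ne_zero.2 (NeZero.ne q)
  rw [gaussMean, Fintype.expect_eq_sum_div_card, norm_div, ← Real.sqrt_sq (norm_nonneg _),
    ← Real.sqrt_sq (norm_nonneg (Fintype.card _ : ℂ)), ← Real.sqrt_div' _ (by positivity),
    sq_norm_sum_addChar_mul_sq (ZMod.isPrimitive_stdAddChar q) h2]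
  simp_rw [hker]
  rw [card_zmod_mul_eq_zero, ZMod.card, Complex.norm_natCast]
  congr 1
  field_simp

end GaussSum

section PeriodicSum

lemma abs_card_Ioc_filter_intCast_eq_sub_le {q : ℕ} [NeZero q] {a b : ℤ} (hab : a ≤ b)
    (c : ZMod q) : |(#{x ∈ Ioc a b | ((x : ℤ) : ZMod q) = c} : ℝ) - (b - a) / q| ≤ 1 := by
  obtain ⟨v, rfl⟩ := ZMod.intCast_surjective c
  have hq : (0 : ℤ) < q := mod_cast Nat.pos_of_neZero q
  have hcard := Int.Ioc_filter_modEq_card a b hq v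
  simp_rw [ZMod.intCast_eq_intCast_iff]
  have hfloor : ⌊((a : ℚ) - v) / (q : ℤ)⌋ ≤ ⌊((b : ℚ) - v) / (q : ℤ)⌋ := by gcongr
  rw [max_eq_left (sub_nonneg.2 hfloor)] at hcard
  have hdiff : ((b : ℚ) - v) / (q : ℤ) - ((a : ℚ) - v) / (q : ℤ) = (b - a) / q := by
    push_cast
    ring
  suffices h : |(#{x ∈ Ioc a b | x ≡ v [ZMOD q]} : ℚ) - (b - a) / q| ≤ 1 by exact_mod_cast h
  rw [← Int.cast_natCast, hcard, ← hdiff, abs_le, Int.cast_sub]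
  constructor <;> linarith [Int.floor_le (((a : ℚ) - v) / (q : ℤ)),
    Int.floor_le (((b : ℚ) - v) / (q : ℤ)), Int.lt_floor_add_one (((a : ℚ) - v) / (q : ℤ)),
    Int.lt_floor_add_one (((b : ℚ) - v) / (q : ℤ))]

lemma norm_sum_Ioc_intCast_sub_le {q : ℕ} [NeZero q] (f : ZMod q → ℂ) {a b : ℤ} (hab : a ≤ b) :
    ‖∑ x ∈ Ioc a b, f x - (b - a) * 𝔼 c, f c‖ ≤ ∑ c, ‖f c‖ := by
  have hfiber : ∑ x ∈ Ioc a b, f x - (b - a) * 𝔼 c, f c =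
      ∑ c, ((#{x ∈ Ioc a b | ((x : ℤ) : ZMod q) = c} - (b - a) / q : ℝ) : ℂ) * f c := by
    rw [← sum_fiberwise (Ioc a b) (fun x : ℤ ↦ (x : ZMod q)), Fintype.expect_eq_sum_div_card,
      ZMod.card, mul_div_assoc', ← div_mul_eq_mul_div, mul_sum, ← sum_sub_distrib]
    refine sum_congr rfl fun c _ ↦ ?_
    rw [sum_congr rfl fun x hx ↦ by rw [(mem_filter.1 hx).2], sum_const, nsmul_eq_mul]
    push_cast
    ring
  rw [hfiber]
  refine norm_sum_le_of_le _ fun c _ ↦ ?_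
  rw [norm_mul, Complex.norm_real, Real.norm_eq_abs]
  exact mul_le_of_le_one_left (norm_nonneg _) (abs_card_Ioc_filter_intCast_eq_sub_le hab c)

end PeriodicSum

section LatticeBall

/-- The squared Euclidean norm `a² + b² + c²` of a lattice point. -/
def sqNorm (v : ℤ × ℤ × ℤ) : ℕ := v.1.natAbs ^ 2 + v.2.1.natAbs ^ 2 + v.2.2.natAbs ^ 2

lemma cast_sqNorm {A : Type*} [CommRing A] (v : ℤ × ℤ × ℤ) :
    (sqNorm v : A) = (v.1 : A) ^ 2 + (v.2.1 : A) ^ 2 + (v.2.2 : A) ^ 2 := by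
  have h : ((sqNorm v : ℤ) : A) = ((v.1 ^ 2 + v.2.1 ^ 2 + v.2.2 ^ 2 : ℤ) : A) := by simp [sqNorm]
  simpa using h

/-- The integers of absolute value at most `|R|`, the range of each coordinate of a lattice point
in the ball of radius `|R|`. -/
noncomputable def intBall (R : ℝ) : Finset ℤ := Icc (-⌊|R|⌋) ⌊|R|⌋

lemma mem_intBall {R : ℝ} {x : ℤ} : x ∈ intBall R ↔ (x : ℝ) ^ 2 ≤ R ^ 2 := by
  rw [intBall, mem_Icc, ← abs_le, Int.le_floor, Int.cast_abs, sq_le_sq]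

lemma card_intBall_le {R : ℝ} (hR : 0 ≤ R) : #(intBall R) ≤ 2 * R + 1 := by
  have hfloor := Int.floor_nonneg.2 hR
  rw [intBall, Int.card_Icc, ← Int.cast_natCast, abs_of_nonneg hR, Int.toNat_of_nonneg (by lia)]
  push_cast
  linarith [Int.floor_le R]

lemma sub_one_lt_card_intBall {R : ℝ} (hR : 0 ≤ R) : 2 * R - 1 < #(intBall R) := by
  have hfloor := Int.floor_nonneg.2 hR
  rw [intBall, Int.card_Icc, ← Int.cast_natCast, abs_of_nonneg hR, Int.toNat_of_nonneg (by lia)]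
  push_cast
  linarith [Int.lt_floor_add_one R]

/-- The lattice points of the closed ball of radius `|R|` about the origin. -/
noncomputable def latticeBall (R : ℝ) : Finset (ℤ × ℤ × ℤ) :=
  {v ∈ intBall R ×ˢ intBall R ×ˢ intBall R | (sqNorm v : ℝ) ≤ R ^ 2}

lemma mem_latticeBall {R : ℝ} {v : ℤ × ℤ × ℤ} : v ∈ latticeBall R ↔ (sqNorm v : ℝ) ≤ R ^ 2 := by
  simp only [latticeBall, mem_filter, mem_product, mem_intBall, and_iff_right_iff_imp, cast_sqNorm]
  intro h
  refine ⟨?_, ?_, ?_⟩ <;> nlinarith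

lemma card_intBall_pow_three_le_card_latticeBall (R : ℝ) :
    #(intBall (R / 2)) ^ 3 ≤ #(latticeBall R) := by
  rw [pow_three, ← card_product, ← card_product]
  refine card_le_card fun v hv ↦ ?_
  simp only [mem_product, mem_intBall] at hv
  rw [mem_latticeBall, cast_sqNorm]
  linarith [sq_nonneg R]

/-- The sum of the product function `f ⊗ g ⊗ h` on `(ℤ/q)³` over a lattice ball. -/
noncomputable def ballSum {q : ℕ} (R : ℝ) (f g h : ZMod q → ℂ) : ℂ :=
  ∑ v ∈ latticeBall R, f v.1 * g v.2.1 * h v.2.2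

lemma ballSum_rotate {q : ℕ} (R : ℝ) (f g h : ZMod q → ℂ) : ballSum R f g h = ballSum R g h f := by
  refine sum_nbij' (fun v ↦ (v.2.1, v.2.2, v.1)) (fun v ↦ (v.2.2, v.1, v.2.1)) ?_ ?_
    (fun _ _ ↦ rfl) (fun _ _ ↦ rfl) (fun _ _ ↦ by ring) <;>
  · intro v hv
    rw [mem_latticeBall, cast_sqNorm] at hv ⊢
    linarith

variable {q : ℕ} [NeZero q] (f g h : ZMod q → ℂ) (R : ℝ)

lemma norm_sum_intBall_sq_le_sub_le (t : ℝ) :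
    ‖(∑ x ∈ intBall R with ((x : ℤ) : ℝ) ^ 2 ≤ t, f x) -
      #{x ∈ intBall R | ((x : ℤ) : ℝ) ^ 2 ≤ t} * 𝔼 c, f c‖ ≤ ∑ c, ‖f c‖ := by
  obtain ht | ht := lt_or_ge t 0
  · have hempty : ({x ∈ intBall R | ((x : ℤ) : ℝ) ^ 2 ≤ t} : Finset ℤ) = ∅ :=
      filter_false_of_mem fun x _ ↦ by nlinarith [sq_nonneg (x : ℝ)]
    simpa [hempty] using sum_nonneg fun c _ ↦ norm_nonneg (f c)
  · have hm : 0 ≤ min ⌊|R|⌋ ⌊√t⌋ :=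
      le_min (Int.floor_nonneg.2 (abs_nonneg R)) (Int.floor_nonneg.2 (Real.sqrt_nonneg t))
    set m := min ⌊|R|⌋ ⌊√t⌋ with m_def
    have hIoc : ({x ∈ intBall R | ((x : ℤ) : ℝ) ^ 2 ≤ t} : Finset ℤ) = Ioc (-(m + 1)) m := by
      ext x
      have hx : (x : ℝ) ^ 2 ≤ t ↔ |x| ≤ ⌊√t⌋ := by
        rw [Int.le_floor, Int.cast_abs, ← Real.sqrt_sq_eq_abs, Real.sqrt_le_sqrt_iff ht]
      rw [mem_filter, intBall, mem_Icc, mem_Ioc, ← abs_le, hx, ← le_min_iff, ← m_def, abs_le]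
      lia
    have hcard : ((#(Ioc (-(m + 1)) m) : ℕ) : ℂ) = m - (-(m + 1) : ℤ) := by
      rw [Int.card_Ioc, ← Int.cast_natCast, Int.toNat_of_nonneg (by lia), Int.cast_sub]
    rw [hIoc, hcard]
    exact norm_sum_Ioc_intCast_sub_le f (by lia)

lemma norm_ballSum_sub_expect_mul_le :
    ‖ballSum R f g h - (𝔼 c, f c) * ballSum R (fun _ ↦ 1 : ZMod q → ℂ) g h‖ ≤
      (∑ c, ‖f c‖) * ((∑ y ∈ intBall R, ‖g y‖) * ∑ z ∈ intBall R, ‖h z‖) := by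
  have slice (u : ZMod q → ℂ) : ballSum R u g h = ∑ p ∈ intBall R ×ˢ intBall R,
      (∑ x ∈ intBall R with ((x : ℤ) : ℝ) ^ 2 ≤ R ^ 2 - p.1 ^ 2 - p.2 ^ 2, u x) *
        (g p.1 * h p.2) := by
    rw [ballSum, latticeBall, sum_filter, sum_product_right]
    refine sum_congr rfl fun p _ ↦ ?_
    rw [sum_filter, sum_mul]
    refine sum_congr rfl fun x _ ↦ ?_
    simp only [cast_sqNorm, add_assoc, ← le_sub_iff_add_le, ← sub_sub, ite_mul, zero_mul, mul_assoc]
  rw [slice, slice, mul_sum, ← sum_sub_distrib, sum_mul_sum, ← sum_product', mul_sum]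
  refine norm_sum_le_of_le _ fun p _ ↦ ?_
  rw [← mul_assoc (𝔼 c, f c), ← sub_mul, norm_mul, norm_mul]
  gcongr
  simpa [mul_comm] using norm_sum_intBall_sq_le_sub_le f R (R ^ 2 - p.1 ^ 2 - p.2 ^ 2)

variable {f R}

lemma norm_ballSum_sub_expect_pow_mul_card_le {A B : ℝ} (hA : ∑ c, ‖f c‖ ≤ A)
    (hB : ∑ x ∈ intBall R, ‖f x‖ ≤ B) (hE : ‖𝔼 c, f c‖ * #(intBall R) ≤ B) :
    ‖ballSum R f f f - (𝔼 c, f c) ^ 3 * #(latticeBall R)‖ ≤ 3 * A * B ^ 2 := by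
  have hfst := norm_ballSum_sub_expect_mul_le f f f R
  have hsnd := norm_ballSum_sub_expect_mul_le f f (fun _ ↦ 1) R
  have htrd := norm_ballSum_sub_expect_mul_le f (fun _ ↦ 1) (fun _ ↦ 1) R
  have hcard : ballSum R (fun _ : ZMod q ↦ 1) (fun _ ↦ 1) (fun _ ↦ 1) = #(latticeBall R) := by
    simp [ballSum]
  rw [← ballSum_rotate R (fun _ ↦ 1)] at hsnd
  rw [hcard, ← ballSum_rotate R (fun _ ↦ 1)] at htrd
  simp only [norm_one, sum_const, nsmul_eq_mul, mul_one] at hsnd htrd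
  set μ := 𝔼 c, f c
  set n := (#(intBall R) : ℝ)
  have hB0 : 0 ≤ B := (sum_nonneg fun x _ ↦ norm_nonneg _).trans hB
  have hA0 : 0 ≤ A := (sum_nonneg fun c _ ↦ norm_nonneg (f c)).trans hA
  have htelescope : ballSum R f f f - μ ^ 3 * #(latticeBall R) =
      (ballSum R f f f - μ * ballSum R (fun _ ↦ 1) f f) +
      μ * (ballSum R (fun _ ↦ 1) f f - μ * ballSum R (fun _ ↦ 1) f (fun _ ↦ 1)) +
      μ ^ 2 * (ballSum R (fun _ ↦ 1) f (fun _ ↦ 1) - μ * #(latticeBall R)) := by ring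
  rw [htelescope]
  calc _ ≤ (∑ c, ‖f c‖) * ((∑ y ∈ intBall R, ‖f y‖) * ∑ z ∈ intBall R, ‖f z‖) +
        ‖μ‖ * ((∑ c, ‖f c‖) * ((∑ y ∈ intBall R, ‖f y‖) * n)) +
        ‖μ‖ ^ 2 * ((∑ c, ‖f c‖) * (n * n)) := by
        refine norm_add₃_le.trans ?_
        rw [norm_mul, norm_mul, norm_pow]
        gcongr
    _ = (∑ c, ‖f c‖) * ((∑ y ∈ intBall R, ‖f y‖) ^ 2 +
          (∑ y ∈ intBall R, ‖f y‖) * (‖μ‖ * n) + (‖μ‖ * n) ^ 2) := by ring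
    _ ≤ A * (B ^ 2 + B * B + B ^ 2) := by gcongr
    _ = 3 * A * B ^ 2 := by ring

end LatticeBall

section Visible

/-- The greatest common divisor of the three coordinates of a lattice point. -/
def content (v : ℤ × ℤ × ℤ) : ℕ := Int.gcd (Int.gcd v.1 v.2.1 : ℤ) v.2.2

lemma content_zero : content 0 = 0 := rfl

lemma dvd_content_iff {d : ℕ} {v : ℤ × ℤ × ℤ} : d ∣ content v ↔ ∃ w : ℤ × ℤ × ℤ, d • w = v := by
  rw [content, Int.dvd_gcd_iff, Int.natCast_dvd_natCast, Int.dvd_gcd_iff]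
  constructor
  · rintro ⟨⟨⟨a, ha⟩, b, hb⟩, c, hc⟩
    exact ⟨(a, b, c), by ext <;> simp [ha, hb, hc]⟩
  · rintro ⟨w, rfl⟩
    simp

lemma sqNorm_nsmul (d : ℕ) (v : ℤ × ℤ × ℤ) : sqNorm (d • v) = d ^ 2 * sqNorm v := by
  simp [sqNorm, Int.natAbs_mul]
  ring

lemma sqNorm_pos {v : ℤ × ℤ × ℤ} (hv : v ≠ 0) : 0 < sqNorm v := by
  contrapose! hv
  have h : v.1 = 0 ∧ v.2.1 = 0 ∧ v.2.2 = 0 := by simpa [sqNorm, and_assoc] using hv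
  ext <;> simp [h]

lemma content_pos {v : ℤ × ℤ × ℤ} (hv : v ≠ 0) : 0 < content v := by
  refine Nat.pos_of_ne_zero fun h ↦ hv ?_
  obtain ⟨w, rfl⟩ := dvd_content_iff.1 (dvd_of_eq h.symm)
  exact zero_nsmul w

lemma content_sq_le_sqNorm (v : ℤ × ℤ × ℤ) : content v ^ 2 ≤ sqNorm v := by
  obtain rfl | hv := eq_or_ne v 0
  · simp [content_zero]
  · obtain ⟨w, hw⟩ := dvd_content_iff.1 (dvd_refl (content v))
    have hw0 : w ≠ 0 := fun h ↦ hv (by rw [← hw, h, nsmul_zero])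
    conv_rhs => rw [← hw, sqNorm_nsmul]
    exact Nat.le_mul_of_pos_right _ (sqNorm_pos hw0)

lemma nsmul_mem_latticeBall {d : ℕ} (hd : d ≠ 0) {R : ℝ} {v : ℤ × ℤ × ℤ} :
    d • v ∈ latticeBall R ↔ v ∈ latticeBall (R / d) := by
  rw [mem_latticeBall, mem_latticeBall, sqNorm_nsmul, div_pow, le_div_iff₀' (by positivity)]
  push_cast
  rfl

/-- The visible lattice points of the closed ball of radius `|R|` about the origin. -/
noncomputable def visibleBall (R : ℝ) : Finset (ℤ × ℤ × ℤ) := {v ∈ latticeBall R | content v = 1}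

lemma Nstar_eq_card_visibleBall (R : ℝ) : Nstar R = #(visibleBall R) := by
  rw [Nstar, ← Set.ncard_coe_finset]
  congr 1
  ext v
  have : content v = 1 → v ≠ 0 := by
    rintro h rfl
    simp [content_zero] at h
  simp only [visibleBall, coe_filter, mem_latticeBall, cast_sqNorm, Set.mem_ofPred_eq]
  rw [content] at *
  tauto

variable {M : Type*} [AddCommGroup M] (F : ℤ × ℤ × ℤ → M) (R : ℝ)

lemma sum_latticeBall_filter_dvd_content {d : ℕ} (hd : d ≠ 0) :
    ∑ v ∈ latticeBall R with d ∣ content v, F v = ∑ w ∈ latticeBall (R / d), F (d • w) := by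
  have hinj : Function.Injective fun w : ℤ × ℤ × ℤ ↦ d • w := nsmul_right_injective hd
  refine (sum_congr ?_ fun _ _ ↦ rfl).trans (sum_map _ ⟨_, hinj⟩ F)
  ext v
  simp only [mem_filter, dvd_content_iff, Finset.mem_map, Function.Embedding.coeFn_mk]
  constructor
  · rintro ⟨hv, w, rfl⟩
    exact ⟨w, (nsmul_mem_latticeBall hd).1 hv, rfl⟩
  · rintro ⟨w, hw, rfl⟩
    exact ⟨(nsmul_mem_latticeBall hd).2 hw, w, rfl⟩

lemma sum_moebius_filter_dvd {n N : ℕ} (hn : n ≠ 0) (hN : n ≤ N) :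
    ∑ d ∈ Icc 1 N with d ∣ n, ArithmeticFunction.moebius d = if n = 1 then 1 else 0 := by
  have hdiv : ({d ∈ Icc 1 N | d ∣ n} : Finset ℕ) = n.divisors := by
    ext d
    rw [mem_filter, mem_Icc, Nat.mem_divisors]
    exact ⟨fun h ↦ ⟨h.2, hn⟩, fun h ↦ ⟨⟨Nat.pos_of_dvd_of_pos h.1 (Nat.pos_of_ne_zero hn),
      (Nat.le_of_dvd (Nat.pos_of_ne_zero hn) h.1).trans hN⟩, h.1⟩⟩
  rw [hdiv, ← ArithmeticFunction.coe_mul_zeta_apply, ArithmeticFunction.moebius_mul_coe_zeta,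
    ArithmeticFunction.one_apply]

lemma sum_visibleBall : ∑ v ∈ visibleBall R, F v =
    ∑ d ∈ Icc 1 ⌊|R|⌋₊, ArithmeticFunction.moebius d •
      (∑ w ∈ latticeBall (R / d), F (d • w) - F 0) := by
  have herase : visibleBall R = {v ∈ (latticeBall R).erase 0 | content v = 1} := by
    rw [visibleBall, filter_erase, erase_eq_of_notMem]
    simp [content_zero]
  have hcontent {v} (hv : v ∈ (latticeBall R).erase 0) : content v ≤ ⌊|R|⌋₊ := by
    rw [Nat.le_floor_iff (abs_nonneg R), ← Nat.abs_cast, ← sq_le_sq]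
    refine le_trans ?_ (mem_latticeBall.1 (mem_of_mem_erase hv))
    exact mod_cast content_sq_le_sqNorm v
  calc ∑ v ∈ visibleBall R, F v
      = ∑ v ∈ (latticeBall R).erase 0, ∑ d ∈ Icc 1 ⌊|R|⌋₊ with d ∣ content v,
          ArithmeticFunction.moebius d • F v := by
        rw [herase, sum_filter]
        refine sum_congr rfl fun v hv ↦ ?_
        rw [← sum_smul, sum_moebius_filter_dvd (content_pos (ne_of_mem_erase hv)).ne'
          (hcontent hv), ite_smul, one_smul, zero_smul]
    _ = ∑ d ∈ Icc 1 ⌊|R|⌋₊, ∑ v ∈ (latticeBall R).erase 0 with d ∣ content v,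
          ArithmeticFunction.moebius d • F v := by
        simp_rw [sum_filter]
        exact sum_comm
    _ = _ := by
        refine sum_congr rfl fun d hd ↦ ?_
        have hd0 : d ≠ 0 := Nat.one_le_iff_ne_zero.1 (mem_Icc.1 hd).1
        have hzero : 0 ∈ (latticeBall R).filter (d ∣ content ·) := by
          simp [mem_latticeBall, content_zero, sqNorm, sq_nonneg]
        rw [← smul_sum, filter_erase, sum_erase_eq_sub hzero,
          sum_latticeBall_filter_dvd_content F R hd0]

end Visible

section InversePowerSums

lemma sum_Icc_one_inv_sq_le_two (N : ℕ) : ∑ d ∈ Icc 1 N, ((d : ℝ) ^ 2)⁻¹ ≤ 2 := by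
  have hIoo : Ioo 0 (N + 1) = Icc 1 N := by ext; grind
  simpa [hIoo] using sum_Ioo_inv_sq_le (α := ℝ) 0 (N + 1)

lemma sum_Ioc_le_of_le_sub {f g : ℕ → ℝ} {K : ℕ} (hg : ∀ n, 0 ≤ g n)
    (hfg : ∀ n ≥ K, f (n + 1) ≤ g n - g (n + 1)) (N : ℕ) : ∑ n ∈ Ioc K N, f n ≤ g K := by
  obtain hNK | hKN := lt_or_ge N K
  · rw [Ioc_eq_empty (by lia), sum_empty]
    exact hg K
  suffices h : ∑ n ∈ Ioc K N, f n ≤ g K - g N from h.trans (sub_le_self _ (hg N))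
  induction N, hKN using Nat.le_induction with
  | base => simp
  | succ n hn ih =>
    rw [sum_Ioc_succ_top (by lia)]
    linarith [hfg n hn]

lemma sum_Ioc_one_inv_cube_le (N : ℕ) : ∑ d ∈ Ioc 1 N, ((d : ℝ) ^ 3)⁻¹ ≤ 1 / 4 := by
  refine (sum_Ioc_le_of_le_sub (g := fun n ↦ 1 / (2 * n * (n + 1))) (fun n ↦ by positivity)
    (fun n hn ↦ ?_) N).trans (by norm_num)
  have hn : (0 : ℝ) < n := mod_cast hn
  push_cast
  rw [div_sub_div _ _ (by positivity) (by positivity), inv_eq_one_div,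
    div_le_div_iff₀ (by positivity) (by positivity)]
  nlinarith [pow_pos hn 2, pow_pos hn 3]

lemma sq_sqrt_succ_sub_sq_sqrt (n : ℕ) : √(n + 1 : ℕ) ^ 2 - √(n : ℝ) ^ 2 = 1 := by
  rw [Real.sq_sqrt (by positivity), Real.sq_sqrt (by positivity)]
  simp

lemma sum_Ioc_inv_sqrt_cube_le {K : ℕ} (hK : K ≠ 0) (N : ℕ) :
    ∑ d ∈ Ioc K N, (√d ^ 3)⁻¹ ≤ 2 / √K := by
  refine sum_Ioc_le_of_le_sub (g := fun n ↦ 2 / √n) (fun n ↦ by positivity) (fun n hn ↦ ?_) N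
  have ha : 0 < √(n : ℝ) := Real.sqrt_pos.2 (mod_cast by lia)
  have hab : √(n : ℝ) ≤ √(n + 1 : ℕ) := Real.sqrt_le_sqrt (by simp)
  have hsq := sq_sqrt_succ_sub_sq_sqrt n
  generalize √(n + 1 : ℕ) = b at *
  generalize √(n : ℝ) = a at *
  have hb : 0 < b := ha.trans_le hab
  calc (b ^ 3)⁻¹ = 2 / (b * b * (b + b)) := by field_simp; norm_num
    _ ≤ 2 / (a * b * (a + b)) := by gcongr
    _ = 2 / a - 2 / b := by
      rw [div_sub_div _ _ ha.ne' hb.ne', div_eq_div_iff (by positivity) (by positivity)]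
      linear_combination -2 * a * b * hsq

lemma sum_sqrt_gcd_div_cube_le {q K : ℕ} (hK : K ≠ 0) (hq : q.Coprime K.factorial) (N : ℕ) :
    ∑ d ∈ Ioc 1 N, (√(q.gcd d) / d) ^ 3 ≤ 1 / 4 + 2 / √K := by
  have hterm (d : ℕ) (hd : d ∈ Ioc 1 N) :
      (√(q.gcd d) / d) ^ 3 ≤ ((d : ℝ) ^ 3)⁻¹ + if K < d then (√d ^ 3)⁻¹ else 0 := by
    have hd1 : 1 < d := (mem_Ioc.1 hd).1
    split_ifs with hKd
    · have hgcd : √(q.gcd d) / d ≤ √d / d := by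
        gcongr
        exact Nat.gcd_le_right _ (by lia)
      rw [Real.sqrt_div_self] at hgcd
      refine (pow_le_pow_left₀ (by positivity) hgcd 3).trans ?_
      rw [inv_pow]
      exact le_add_of_nonneg_left (by positivity)
    · have hgcd : q.gcd d = 1 :=
        hq.coprime_dvd_right (Nat.dvd_factorial (by lia) (not_lt.1 hKd))
      simp [hgcd]
  calc _ ≤ ∑ d ∈ Ioc 1 N, (((d : ℝ) ^ 3)⁻¹ + if K < d then (√d ^ 3)⁻¹ else 0) :=
        sum_le_sum hterm
    _ ≤ 1 / 4 + ∑ d ∈ Ioc K N, (√d ^ 3)⁻¹ := by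
        rw [sum_add_distrib, ← sum_filter]
        refine add_le_add (sum_Ioc_one_inv_cube_le N) ?_
        refine sum_le_sum_of_subset_of_nonneg ?_ fun _ _ _ ↦ by positivity
        exact fun d hd ↦ by grind
    _ ≤ 1 / 4 + 2 / √K := by
        gcongr
        exact sum_Ioc_inv_sqrt_cube_le hK N

end InversePowerSums

section VisibleSum

/-- The exponential sum `∑ e(|v|²/q)` over the visible points of a ball. -/
noncomputable def visibleSum (q : ℕ) [NeZero q] (R : ℝ) : ℂ :=
  ∑ v ∈ visibleBall R, ZMod.stdAddChar (sqNorm v : ZMod q)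

variable {q : ℕ} [NeZero q] {R : ℝ}

lemma norm_ballSum_stdAddChar_sub_le (d : ℕ) (hR : 0 ≤ R) :
    ‖∑ w ∈ latticeBall R, ZMod.stdAddChar (sqNorm (d • w) : ZMod q) -
      gaussMean q d ^ 3 * #(latticeBall R)‖ ≤ 3 * q * (2 * R + 1) ^ 2 := by
  have hsum : ∑ w ∈ latticeBall R, ZMod.stdAddChar (sqNorm (d • w) : ZMod q) =
      ballSum R (fun x ↦ ZMod.stdAddChar ((d : ZMod q) ^ 2 * x ^ 2))
        (fun x ↦ ZMod.stdAddChar ((d : ZMod q) ^ 2 * x ^ 2))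
        (fun x ↦ ZMod.stdAddChar ((d : ZMod q) ^ 2 * x ^ 2)) := by
    refine sum_congr rfl fun w _ ↦ ?_
    rw [← AddChar.map_add_eq_mul, ← AddChar.map_add_eq_mul, sqNorm_nsmul, Nat.cast_mul,
      cast_sqNorm]
    congr 1
    push_cast
    ring
  have hone (x : ZMod q) : ‖(ZMod.stdAddChar x : ℂ)‖ = 1 := AddChar.norm_apply _ x
  rw [hsum]
  refine norm_ballSum_sub_expect_pow_mul_card_le (by simp [hone])
    (by simpa [hone] using card_intBall_le hR) ?_
  exact (mul_le_of_le_one_left (by positivity) (norm_gaussMean_le_one q d)).trans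
    (card_intBall_le hR)

lemma card_intBall_filter_dvd_le (hR : 0 ≤ R) {d : ℕ} (hd : d ≠ 0) :
    #{x ∈ intBall R | (d : ℤ) ∣ x} ≤ 2 * (R / d) + 1 := by
  refine le_trans ?_ (card_intBall_le (by positivity))
  have hsub : ({x ∈ intBall R | (d : ℤ) ∣ x} : Finset ℤ) ⊆ (intBall (R / d)).image (d * ·) := by
    intro x hx
    obtain ⟨hx, y, rfl⟩ := mem_filter.1 hx
    refine mem_image_of_mem _ (mem_intBall.2 ?_)
    rw [mem_intBall] at hx
    push_cast at hx
    rwa [div_pow, le_div_iff₀' (by positivity), ← mul_pow]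
  exact mod_cast (card_le_card hsub).trans card_image_le

lemma abs_card_latticeBall_div_sub_le (hR : 0 ≤ R) {d : ℕ} (hd : d ≠ 0) :
    |(#(latticeBall (R / d)) : ℝ) - #(latticeBall R) / d ^ 3| ≤ 3 * (2 * (R / d) + 1) ^ 2 := by
  have := NeZero.mk hd
  set f : ZMod d → ℂ := fun c ↦ if c = 0 then 1 else 0
  have hexp : 𝔼 c, f c = (d : ℂ)⁻¹ := by simp [f]
  have hball : ballSum R f f f = #(latticeBall (R / d)) := by
    have h := sum_latticeBall_filter_dvd_content (fun _ ↦ (1 : ℂ)) R hd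
    rw [sum_const _ (s := latticeBall (R / d)), nsmul_one] at h
    rw [← h, sum_filter]
    refine sum_congr rfl fun v _ ↦ ?_
    simp only [f, ZMod.intCast_zmod_eq_zero_iff_dvd, content, Int.dvd_gcd_iff,
      Int.natCast_dvd_natCast]
    split_ifs <;> simp_all
  have hint : ∑ x ∈ intBall R, ‖f x‖ ≤ 2 * (R / d) + 1 := by
    refine le_trans (le_of_eq ?_) (card_intBall_filter_dvd_le hR hd)
    simp [f, apply_ite norm, ZMod.intCast_zmod_eq_zero_iff_dvd]
  have hmean : ‖𝔼 c, f c‖ * #(intBall R) ≤ 2 * (R / d) + 1 := by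
    rw [hexp, norm_inv, Complex.norm_natCast, inv_mul_le_iff₀ (by positivity)]
    have hd1 : (1 : ℝ) ≤ d := mod_cast Nat.one_le_iff_ne_zero.2 hd
    have hcancel : d * (2 * (R / d) + 1) = 2 * R + d := by field_simp
    linarith [card_intBall_le hR]
  have h := norm_ballSum_sub_expect_pow_mul_card_le (A := 1) (by simp [f, apply_ite norm]) hint
    hmean
  rw [hexp, hball, mul_one] at h
  rw [← Real.norm_eq_abs, ← Complex.norm_real]
  convert h using 2
  push_cast
  ring

lemma norm_ballSum_sub_one_sub_gaussMean_le {d : ℕ} (hd : d ≠ 0) (hdR : d ≤ R) :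
    ‖(∑ w ∈ latticeBall (R / d), ZMod.stdAddChar (sqNorm (d • w) : ZMod q) - 1) -
      (gaussMean q d / d) ^ 3 * #(latticeBall R)‖ ≤ 55 * q * (R / d) ^ 2 := by
  have hR : 0 ≤ R := d.cast_nonneg.trans hdR
  have hq : (1 : ℝ) ≤ q := mod_cast Nat.one_le_iff_ne_zero.2 (NeZero.ne q)
  have hRd : 1 ≤ R / d := (one_le_div (by positivity)).2 hdR
  have hcard : ‖gaussMean q d ^ 3 * ((#(latticeBall (R / d)) - #(latticeBall R) / d ^ 3 : ℝ) : ℂ)‖ ≤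
      3 * (2 * (R / d) + 1) ^ 2 := by
    rw [norm_mul, Complex.norm_real, norm_pow]
    exact (mul_le_of_le_one_left (abs_nonneg _) (pow_le_one₀ (norm_nonneg _)
      (norm_gaussMean_le_one q d))).trans (abs_card_latticeBall_div_sub_le hR hd)
  calc _ = ‖(∑ w ∈ latticeBall (R / d), ZMod.stdAddChar (sqNorm (d • w) : ZMod q) -
          gaussMean q d ^ 3 * #(latticeBall (R / d))) +
        gaussMean q d ^ 3 * ((#(latticeBall (R / d)) - #(latticeBall R) / d ^ 3 : ℝ) : ℂ) - 1‖ := by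
        congr 1
        push_cast
        ring
    _ ≤ 3 * q * (2 * (R / d) + 1) ^ 2 + 3 * (2 * (R / d) + 1) ^ 2 + 1 := by
        refine (norm_sub_le _ _).trans (add_le_add ?_ norm_one.le)
        exact norm_add_le_of_le (norm_ballSum_stdAddChar_sub_le d (by positivity)) hcard
    _ ≤ 3 * q * (3 * (R / d)) ^ 2 + 3 * q * (3 * (R / d)) ^ 2 + q * (R / d) ^ 2 := by
        gcongr
        · linarith
        · linarith
        · linarith
        · exact one_le_mul_of_one_le_of_one_le hq (one_le_pow₀ hRd)
    _ = 55 * q * (R / d) ^ 2 := by ring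

lemma norm_visibleSum_sub_le (hR : 0 ≤ R) :
    ‖visibleSum q R - (∑ d ∈ Icc 1 ⌊R⌋₊, ArithmeticFunction.moebius d * (gaussMean q d / d) ^ 3) *
      #(latticeBall R)‖ ≤ 110 * q * R ^ 2 := by
  rw [visibleSum, sum_visibleBall, abs_of_nonneg hR, sum_mul, ← sum_sub_distrib]
  calc _ ≤ ∑ d ∈ Icc 1 ⌊R⌋₊, 55 * q * R ^ 2 * ((d : ℝ) ^ 2)⁻¹ := by
        refine norm_sum_le_of_le _ fun d hd ↦ ?_
        rw [mem_Icc, Nat.one_le_iff_ne_zero, Nat.le_floor_iff hR] at hd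
        rw [zsmul_eq_mul, mul_assoc, ← mul_sub, norm_mul]
        have hmu : ‖(ArithmeticFunction.moebius d : ℂ)‖ ≤ 1 := by
          rw [Complex.norm_intCast]
          exact mod_cast ArithmeticFunction.abs_moebius_le_one
        refine (mul_le_of_le_one_left (norm_nonneg _) hmu).trans ?_
        rw [mul_assoc, ← div_eq_mul_inv, ← div_pow]
        simpa [sqNorm] using norm_ballSum_sub_one_sub_gaussMean_le (q := q) hd.1 hd.2
    _ = 55 * q * R ^ 2 * ∑ d ∈ Icc 1 ⌊R⌋₊, ((d : ℝ) ^ 2)⁻¹ := (mul_sum _ _ _).symm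
    _ ≤ 55 * q * R ^ 2 * 2 := by
        gcongr
        exact sum_Icc_one_inv_sq_le_two _
    _ = 110 * q * R ^ 2 := by ring

lemma one_div_le_norm_sum_moebius_mul_gaussMean (hsq : Squarefree q)
    (hcop : q.Coprime (Nat.factorial 16)) {N : ℕ} (hN : N ≠ 0) :
    1 / (4 * √q ^ 3) ≤
      ‖∑ d ∈ Icc 1 N, ArithmeticFunction.moebius d * (gaussMean q d / d) ^ 3‖ := by
  have h2 : IsUnit (2 : ZMod q) := by
    have : Nat.Coprime 2 q :=
      (hcop.coprime_dvd_right (Nat.dvd_factorial two_pos (by norm_num))).symm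
    exact mod_cast (ZMod.isUnit_iff_coprime 2 q).2 this
  have hnorm (d : ℕ) : ‖(ArithmeticFunction.moebius d : ℂ) * (gaussMean q d / d) ^ 3‖ ≤
      (√(q.gcd d) / d) ^ 3 / √q ^ 3 := by
    have hmu : ‖(ArithmeticFunction.moebius d : ℂ)‖ ≤ 1 := by
      rw [Complex.norm_intCast]
      exact mod_cast ArithmeticFunction.abs_moebius_le_one
    rw [norm_mul, norm_pow, norm_div, norm_gaussMean hsq h2, Complex.norm_natCast,
      Real.sqrt_div (by positivity), div_right_comm, div_pow]
    exact mul_le_of_le_one_left (by positivity) hmu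
  have htail : ‖∑ d ∈ Ioc 1 N, (ArithmeticFunction.moebius d : ℂ) * (gaussMean q d / d) ^ 3‖ ≤
      (3 / 4) / √q ^ 3 := by
    refine (norm_sum_le_of_le _ fun d _ ↦ hnorm d).trans ?_
    rw [← sum_div]
    gcongr
    refine (sum_sqrt_gcd_div_cube_le (by norm_num) hcop N).trans ?_
    rw [show √((16 : ℕ) : ℝ) = 4 from (Real.sqrt_eq_iff_mul_self_eq_of_pos (by norm_num)).2
      (by norm_num)]
    norm_num
  have hhead : ‖(gaussMean q 1 : ℂ) ^ 3‖ = 1 / √q ^ 3 := by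
    rw [norm_pow, norm_gaussMean hsq h2]
    simp
  rw [← add_sum_Ioc_eq_sum_Icc (Nat.one_le_iff_ne_zero.2 hN)]
  calc 1 / (4 * √q ^ 3) = 1 / √q ^ 3 - (3 / 4) / √q ^ 3 := by ring
    _ ≤ _ := by
      refine le_trans ?_ (norm_sub_le_norm_add _ _)
      simp only [ArithmeticFunction.moebius_apply_one, Int.cast_one, one_mul, Nat.cast_one, div_one,
        hhead]
      gcongr

lemma pow_three_div_eight_le_card_latticeBall (hR : 1 ≤ R) : R ^ 3 / 8 ≤ #(latticeBall R) := by
  have h := sub_one_lt_card_intBall (R := R / 2) (by positivity)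
  have hpow : (#(intBall (R / 2)) : ℝ) ^ 3 ≤ #(latticeBall R) :=
    mod_cast card_intBall_pow_three_le_card_latticeBall R
  refine le_trans ?_ hpow
  calc R ^ 3 / 8 = (R / 2) ^ 3 := by ring
    _ ≤ _ := by
      gcongr
      have : (1 : ℝ) ≤ #(intBall (R / 2)) :=
        mod_cast card_pos.2 ⟨0, mem_intBall.2 (by simpa using by positivity)⟩
      linarith

lemma le_norm_visibleSum (hsq : Squarefree q) (hcop : q.Coprime (Nat.factorial 16)) (hR : 1 ≤ R) :
    R ^ 3 / (32 * √q ^ 3) - 110 * q * R ^ 2 ≤ ‖visibleSum q R‖ := by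
  have hmain : R ^ 3 / (32 * √q ^ 3) ≤
      ‖(∑ d ∈ Icc 1 ⌊R⌋₊, ArithmeticFunction.moebius d * (gaussMean q d / d) ^ 3) *
        #(latticeBall R)‖ := by
    rw [norm_mul, Complex.norm_natCast]
    calc R ^ 3 / (32 * √q ^ 3) = 1 / (4 * √q ^ 3) * (R ^ 3 / 8) := by field_simp; norm_num
      _ ≤ _ := by
        gcongr
        · exact one_div_le_norm_sum_moebius_mul_gaussMean hsq hcop (Nat.floor_pos.2 hR).ne'
        · exact pow_three_div_eight_le_card_latticeBall hR
  have herror := norm_visibleSum_sub_le (q := q) (zero_le_one.trans hR)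
  linarith [hmain.trans (norm_le_norm_add_norm_sub (visibleSum q R) _)]

end VisibleSum

section PowerSums

lemma norm_one_sub_mul_norm_geom_sum_le {z : ℂ} (hz : ‖z‖ ≤ 1) (X : ℕ) :
    ‖1 - z‖ * ‖∑ n ∈ range X, z ^ n‖ ≤ 2 := by
  rw [← norm_mul, mul_neg_geom_sum]
  refine (norm_sub_le _ _).trans ?_
  rw [norm_one, norm_pow]
  linarith [pow_le_one₀ (n := X) (norm_nonneg z) hz]

lemma one_sub_mul_sum_range_mul_pow {A : Type*} [CommRing A] (u : ℕ → A) (z : A) (X : ℕ) :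
    (1 - z) * ∑ n ∈ range X, u n * z ^ n =
      u 0 + ∑ n ∈ range X, (u (n + 1) - u n) * z ^ (n + 1) - u X * z ^ X := by
  induction X with
  | zero => simp
  | succ X ih =>
    rw [sum_range_succ, mul_add, ih, sum_range_succ _ X]
    ring

lemma norm_one_sub_mul_norm_sum_monotone_mul_pow_le {a : ℕ → ℝ} (ha : Monotone a) (ha0 : 0 ≤ a 0)
    {z : ℂ} (hz : ‖z‖ ≤ 1) (X : ℕ) :
    ‖1 - z‖ * ‖∑ n ∈ range X, a n * z ^ n‖ ≤ 2 * a X := by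
  have hterm (b : ℝ) (hb : 0 ≤ b) (n : ℕ) : ‖(b : ℂ) * z ^ n‖ ≤ b := by
    rw [norm_mul, Complex.norm_real, Real.norm_of_nonneg hb, norm_pow]
    exact mul_le_of_le_one_right hb (pow_le_one₀ (norm_nonneg _) hz)
  have hincr : ‖∑ n ∈ range X, ((a (n + 1) : ℂ) - a n) * z ^ (n + 1)‖ ≤ a X - a 0 := by
    rw [← sum_range_sub a X]
    exact norm_sum_le_of_le _ fun n _ ↦
      mod_cast hterm _ (sub_nonneg.2 (ha n.le_succ)) (n + 1)
  rw [← norm_mul, one_sub_mul_sum_range_mul_pow fun n ↦ (a n : ℂ)]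
  calc _ ≤ a 0 + (a X - a 0) + a X := by
        refine (norm_sub_le _ _).trans (add_le_add ((norm_add_le _ _).trans ?_) ?_)
        · exact add_le_add (by simpa using hterm _ ha0 0) hincr
        · exact hterm _ (ha0.trans (ha X.zero_le)) X
    _ = 2 * a X := by ring

lemma sum_pow_eq_one_sub_mul_sum_card {ι A : Type*} [CommRing A] {s : Finset ι} {N : ι → ℕ} {X : ℕ}
    (hN : ∀ v ∈ s, N v ≤ X) (z : A) :
    ∑ v ∈ s, z ^ N v = (1 - z) * ∑ n ∈ range X, #{v ∈ s | N v ≤ n} * z ^ n + #s * z ^ X := by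
  have hterm (v : ι) (hv : v ∈ s) :
      z ^ N v = (1 - z) * ∑ n ∈ range X, (if N v ≤ n then z ^ n else 0) + z ^ X := by
    have hIco : (range X).filter (N v ≤ ·) = Ico (N v) X := by ext; grind
    rw [← sum_filter, hIco]
    linear_combination geom_sum_Ico_mul z (hN v hv)
  rw [sum_congr rfl hterm, sum_add_distrib, ← mul_sum, sum_comm, sum_const, nsmul_eq_mul]
  simp_rw [← sum_filter, sum_const, nsmul_eq_mul]

end PowerSums

section SqrtCube

lemma monotone_sub_of_convexOn {f : ℝ → ℝ} (hf : ConvexOn ℝ (Set.Ici 0) f) :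
    Monotone fun n : ℕ ↦ f (n + 1 : ℕ) - f n := by
  refine monotone_nat_of_le_succ fun n ↦ ?_
  have h := hf.slope_mono_adjacent (x := (n : ℝ)) (y := (n + 1 : ℕ)) (z := (n + 1 + 1 : ℕ))
    (Set.mem_Ici.2 (by positivity)) (Set.mem_Ici.2 (by positivity)) (by simp) (by simp)
  simpa [add_sub_cancel_left] using h

lemma convexOn_sqrt_cube : ConvexOn ℝ (Set.Ici 0) fun x : ℝ ↦ √x ^ 3 := by
  refine (convexOn_rpow (p := 3 / 2) (by norm_num)).congr fun x hx ↦ ?_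
  simpa using rpow_div_two_eq_sqrt 3 (Set.mem_Ici.1 hx)

lemma sqrt_cube_succ_sub_le (n : ℕ) : √(n + 1 : ℕ) ^ 3 - √n ^ 3 ≤ 2 * √(n + 1 : ℕ) := by
  have ha : 0 ≤ √(n : ℝ) := Real.sqrt_nonneg _
  have hab : √(n : ℝ) ≤ √(n + 1 : ℕ) := Real.sqrt_le_sqrt (by simp)
  have hsq := sq_sqrt_succ_sub_sq_sqrt n
  generalize √(n + 1 : ℕ) = b at *
  generalize √(n : ℝ) = a at *
  calc b ^ 3 - a ^ 3 = 2 * b * (b ^ 2 - a ^ 2) - (b - a) * (b ^ 2 + a * (b - a)) := by ring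
    _ ≤ 2 * b * (b ^ 2 - a ^ 2) := sub_le_self _ <| mul_nonneg (sub_nonneg.2 hab)
      (add_nonneg (sq_nonneg b) (mul_nonneg ha (sub_nonneg.2 hab)))
    _ = 2 * b := by rw [hsq, mul_one]

end SqrtCube

section FourierChar

lemma four_mul_abs_le_norm_one_sub_fourierChar {t : ℝ} (ht : |t| ≤ 1 / 2) :
    4 * |t| ≤ ‖1 - (𝐞 t : ℂ)‖ := by
  have hpi : |π * t| = π * |t| := by rw [abs_mul, abs_of_pos pi_pos]
  have hsin := mul_abs_le_abs_sin (x := π * t) (by rw [hpi]; nlinarith [pi_pos])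
  rw [hpi, ← mul_assoc, div_mul_cancel₀ _ pi_ne_zero] at hsin
  rw [norm_sub_rev, fourierChar_apply, mul_comm _ Complex.I, Complex.norm_exp_I_mul_ofReal_sub_one,
    norm_mul, norm_eq_abs, norm_eq_abs, abs_two, mul_assoc, mul_div_cancel_left₀ _ two_ne_zero]
  linarith

lemma norm_one_sub_fourierChar_le (t : ℝ) : ‖1 - (𝐞 t : ℂ)‖ ≤ 7 * |t| := by
  rw [norm_sub_rev, fourierChar_apply, mul_comm]
  refine (norm_exp_I_mul_ofReal_sub_one_le).trans ?_
  rw [norm_eq_abs, abs_mul, abs_of_pos two_pi_pos]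
  gcongr
  linarith [pi_lt_d2]

/-- The root of unity `e(1/q)`. -/
noncomputable def rootOfUnity (q : ℕ) : ℂ := 𝐞 (q : ℝ)⁻¹

lemma norm_rootOfUnity (q : ℕ) : ‖rootOfUnity q‖ = 1 := Circle.norm_coe _

lemma stdAddChar_natCast (q : ℕ) [NeZero q] (n : ℕ) :
    (ZMod.stdAddChar (n : ZMod q) : ℂ) = rootOfUnity q ^ n := by
  have h := ZMod.stdAddChar_coe (N := q) n
  rw [Int.cast_natCast] at h
  rw [h, rootOfUnity, fourierChar_apply, ← Complex.exp_nat_mul]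
  congr 1
  push_cast
  ring

lemma norm_one_sub_rootOfUnity_le (q : ℕ) : ‖1 - rootOfUnity q‖ ≤ 7 / q := by
  rw [div_eq_mul_inv, ← abs_of_nonneg (by positivity : 0 ≤ (q : ℝ)⁻¹)]
  exact norm_one_sub_fourierChar_le _

lemma four_div_le_norm_one_sub_rootOfUnity {q : ℕ} (hq : 2 ≤ q) :
    4 / q ≤ ‖1 - rootOfUnity q‖ := by
  have habs : |(q : ℝ)⁻¹| = 1 / q := by rw [abs_of_nonneg (by positivity), one_div]
  have h := four_mul_abs_le_norm_one_sub_fourierChar (t := (q : ℝ)⁻¹)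
    (by rw [habs]; gcongr; exact mod_cast hq)
  rwa [habs, mul_one_div] at h

lemma four_div_mul_le_norm_one_sub_rootOfUnity_mul_conj {q r : ℕ} (hq : 2 ≤ q) (hr : 2 ≤ r)
    (hqr : q ≠ r) :
    4 / (q * r : ℝ) ≤ ‖1 - rootOfUnity q * conj (rootOfUnity r)‖ := by
  have hchar : rootOfUnity q * conj (rootOfUnity r) = 𝐞 ((q : ℝ)⁻¹ - (r : ℝ)⁻¹) := by
    rw [rootOfUnity, rootOfUnity, sub_eq_add_neg, AddChar.map_add_eq_mul, AddChar.map_neg_eq_inv,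
      Circle.coe_mul, Circle.coe_inv_eq_conj]
  have hq2 : (q : ℝ)⁻¹ ≤ 2⁻¹ := by gcongr; exact mod_cast hq
  have hr2 : (r : ℝ)⁻¹ ≤ 2⁻¹ := by gcongr; exact mod_cast hr
  have hq0 : 0 ≤ (q : ℝ)⁻¹ := by positivity
  have hr0 : 0 ≤ (r : ℝ)⁻¹ := by positivity
  rw [hchar]
  refine le_trans ?_ (four_mul_abs_le_norm_one_sub_fourierChar (abs_le.2 ?_))
  · have hdist : (1 : ℝ) ≤ |(r : ℝ) - q| := mod_cast Int.one_le_abs (z := r - q) (by lia)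
    rw [inv_sub_inv (by positivity) (by positivity), abs_div, ← mul_div_assoc,
      abs_of_nonneg (by positivity : (0 : ℝ) ≤ q * r)]
    gcongr
    linarith
  · constructor <;> linarith

end FourierChar

section VisibleError

/-- The deviation of the number of visible points in the ball of radius `R` from `D * R ^ 3`. -/
noncomputable def visibleError (D R : ℝ) : ℝ := Nstar R - D * R ^ 3

lemma visibleSum_sqrt_eq (q : ℕ) [NeZero q] (D : ℝ) (X : ℕ) :
    visibleSum q √X = (1 - rootOfUnity q) * ∑ n ∈ range X, visibleError D √n * rootOfUnity q ^ n +
      D * (∑ n ∈ range X, (√(n + 1 : ℕ) ^ 3 - √n ^ 3 : ℝ) * rootOfUnity q ^ n) * rootOfUnity q +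
        visibleError D √X * rootOfUnity q ^ X := by
  set z := rootOfUnity q
  have hmem (n : ℕ) (v : ℤ × ℤ × ℤ) : v ∈ latticeBall √n ↔ sqNorm v ≤ n := by
    rw [mem_latticeBall, Real.sq_sqrt n.cast_nonneg, Nat.cast_le]
  have hcard (n : ℕ) (hn : n ∈ range X) :
      #{v ∈ visibleBall √X | sqNorm v ≤ n} = Nstar √n := by
    rw [Nstar_eq_card_visibleBall, visibleBall, visibleBall]
    congr 1
    ext v
    have := mem_range.1 hn
    grind
  have hlayer : visibleSum q √X =
      (1 - z) * ∑ n ∈ range X, Nstar √n * z ^ n + Nstar √X * z ^ X := by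
    have h := sum_pow_eq_one_sub_mul_sum_card (s := visibleBall √X) (N := sqNorm) (X := X)
      (fun v hv ↦ (hmem X v).1 (mem_filter.1 hv).1) z
    rw [visibleSum, Nstar_eq_card_visibleBall √X, sum_congr rfl fun v _ ↦ stdAddChar_natCast q _, h]
    congr 2
    exact sum_congr rfl fun n hn ↦ by rw [hcard n hn]
  have hcube : (1 - z) * ∑ n ∈ range X, (√n ^ 3 : ℝ) * z ^ n + (√X ^ 3 : ℝ) * z ^ X =
      (∑ n ∈ range X, (√(n + 1 : ℕ) ^ 3 - √n ^ 3 : ℝ) * z ^ n) * z := by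
    rw [one_sub_mul_sum_range_mul_pow fun n ↦ ((√n ^ 3 : ℝ) : ℂ), sub_add_cancel, sum_mul]
    simp [pow_succ, mul_assoc]
  have herror : ∑ n ∈ range X, Nstar √n * z ^ n =
      ∑ n ∈ range X, visibleError D √n * z ^ n + D * ∑ n ∈ range X, (√n ^ 3 : ℝ) * z ^ n := by
    rw [mul_sum, ← sum_add_distrib]
    refine sum_congr rfl fun n _ ↦ ?_
    rw [visibleError]
    push_cast
    ring
  rw [hlayer, herror, visibleError]
  push_cast at hcube ⊢
  linear_combination D * hcube

lemma norm_visibleSum_sqrt_le {q : ℕ} [NeZero q] (hq : 2 ≤ q) (D : ℝ) (X : ℕ) :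
    ‖visibleSum q √X‖ ≤
      7 / q * ‖∑ n ∈ range X, (visibleError D √n * rootOfUnity q ^ n : ℂ)‖ +
        |D| * (q * √(X + 1 : ℕ)) + |visibleError D √X| := by
  have hz := norm_rootOfUnity q
  have hcubes : ‖∑ n ∈ range X, (((√(n + 1 : ℕ) ^ 3 - √n ^ 3 : ℝ) : ℂ) * rootOfUnity q ^ n)‖ ≤
      q * √(X + 1 : ℕ) := by
    have habel := norm_one_sub_mul_norm_sum_monotone_mul_pow_le
      (monotone_sub_of_convexOn convexOn_sqrt_cube) (by simp) hz.le X
    have h := (mul_le_mul_of_nonneg_right (four_div_le_norm_one_sub_rootOfUnity hq)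
      (norm_nonneg _)).trans
        (habel.trans (mul_le_mul_of_nonneg_left (sqrt_cube_succ_sub_le X) zero_le_two))
    rw [div_mul_eq_mul_div, div_le_iff₀ (by positivity)] at h
    linarith
  rw [visibleSum_sqrt_eq q D X]
  refine norm_add₃_le.trans ?_
  simp only [norm_mul, norm_pow, hz, one_pow, mul_one, Complex.norm_real, norm_eq_abs]
  gcongr
  exact norm_one_sub_rootOfUnity_le q

end VisibleError

section Duality

variable {𝕜 E ι : Type*} [RCLike 𝕜] [NormedAddCommGroup E] [InnerProductSpace 𝕜 E]

lemma norm_sum_smul_sq_le {c : ι → 𝕜} (hc : ∀ i, ‖c i‖ ≤ 1) (s : Finset ι) (φ : ι → E) :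
    ‖∑ i ∈ s, c i • φ i‖ ^ 2 ≤ ∑ i ∈ s, ∑ j ∈ s, ‖inner 𝕜 (φ i) (φ j)‖ := by
  rw [norm_sq_eq_re_inner (𝕜 := 𝕜), sum_inner]
  refine (RCLike.re_le_norm _).trans (norm_sum_le_of_le _ fun i _ ↦ ?_)
  rw [inner_sum]
  refine norm_sum_le_of_le _ fun j _ ↦ ?_
  rw [inner_smul_left, inner_smul_right, norm_mul, norm_mul, RCLike.norm_conj, ← mul_assoc]
  exact mul_le_of_le_one_left (norm_nonneg _) (mul_le_one₀ (hc i) (norm_nonneg _) (hc j))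

lemma sq_sum_norm_inner_le (s : Finset ι) (φ : ι → E) (ξ : E) :
    (∑ i ∈ s, ‖inner 𝕜 (φ i) ξ‖) ^ 2 ≤
      ‖ξ‖ ^ 2 * ∑ i ∈ s, ∑ j ∈ s, ‖inner 𝕜 (φ i) (φ j)‖ := by
  choose c hc hcmul using fun i ↦ RCLike.exists_norm_eq_mul_self (K := 𝕜) (inner 𝕜 (φ i) ξ)
  have hsum : ((∑ i ∈ s, ‖inner 𝕜 (φ i) ξ‖ : ℝ) : 𝕜) =
      inner 𝕜 (∑ i ∈ s, conj (c i) • φ i) ξ := by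
    rw [sum_inner]
    push_cast
    exact sum_congr rfl fun i _ ↦ by
      simpa only [inner_smul_left, RCLike.conj_conj] using hcmul i
  have hle : ∑ i ∈ s, ‖inner 𝕜 (φ i) ξ‖ ≤ ‖∑ i ∈ s, conj (c i) • φ i‖ * ‖ξ‖ := by
    refine le_trans ?_ (norm_inner_le_norm (𝕜 := 𝕜) _ _)
    rw [← hsum, RCLike.norm_ofReal]
    exact le_abs_self _
  calc _ ≤ (‖∑ i ∈ s, conj (c i) • φ i‖ * ‖ξ‖) ^ 2 := by gcongr
    _ = ‖ξ‖ ^ 2 * ‖∑ i ∈ s, conj (c i) • φ i‖ ^ 2 := by ring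
    _ ≤ _ := by
      gcongr
      exact norm_sum_smul_sq_le (fun i ↦ by rw [RCLike.norm_conj, hc]) s φ

end Duality

section SquarefreeCoprime

/-- The squarefree integers in `[2, N]` that are coprime to `M`. -/
def squarefreeCoprime (M N : ℕ) : Finset ℕ := {q ∈ Icc 2 N | Squarefree q ∧ q.Coprime M}

lemma squarefreeCoprime_subset_Icc (M N : ℕ) : squarefreeCoprime M N ⊆ Icc 2 N :=
  filter_subset _ _

lemma log_div_div_le_sum_inv_coprime {M : ℕ} (hM : M ≠ 0) (N : ℕ) :
    log (N / M) / M ≤ ∑ n ∈ Icc 1 N with n.Coprime M, (n : ℝ)⁻¹ := by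
  obtain rfl | hN := eq_or_ne N 0
  · simp
  have hlog : log (N / M) ≤ ∑ i ∈ range (N / M), ((i : ℝ) + 1)⁻¹ := by
    have h := log_add_one_le_harmonic (N / M)
    rw [harmonic] at h
    push_cast at h
    refine (log_le_log (by positivity) ?_).trans h
    exact (Nat.lt_floor_add_one _).le.trans_eq (by rw [Nat.floor_div_eq_div])
  have hinj : Set.InjOn (fun i ↦ M * i + 1) (range (N / M)) := fun i _ j _ hij ↦
    Nat.eq_of_mul_eq_mul_left (Nat.pos_of_ne_zero hM) (Nat.succ_injective hij)
  calc _ ≤ (∑ i ∈ range (N / M), ((i : ℝ) + 1)⁻¹) / M := by gcongr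
    _ ≤ ∑ i ∈ range (N / M), ((M * i + 1 : ℕ) : ℝ)⁻¹ := by
      rw [sum_div]
      refine sum_le_sum fun i _ ↦ ?_
      have hM1 : (1 : ℝ) ≤ M := mod_cast Nat.one_le_iff_ne_zero.2 hM
      rw [div_eq_mul_inv, ← mul_inv]
      push_cast
      gcongr
      linarith
    _ = ∑ n ∈ (range (N / M)).image (M * · + 1), (n : ℝ)⁻¹ :=
      (sum_image (f := fun n : ℕ ↦ (n : ℝ)⁻¹) hinj).symm
    _ ≤ _ := by
      refine sum_le_sum_of_subset_of_nonneg ?_ fun _ _ _ ↦ by positivity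
      refine image_subset_iff.2 fun i hi ↦ mem_filter.2 ⟨mem_Icc.2 ⟨by lia, ?_⟩, by simp⟩
      calc M * i + 1 ≤ M * (i + 1) := by rw [mul_add_one]; lia
        _ ≤ M * (N / M) := Nat.mul_le_mul_left _ (mem_range.1 hi)
        _ ≤ N := Nat.mul_div_le N M

lemma sum_inv_coprime_le_two_mul (M N : ℕ) :
    ∑ n ∈ Icc 1 N with n.Coprime M, (n : ℝ)⁻¹ ≤
      2 * (1 + ∑ q ∈ squarefreeCoprime M N, (q : ℝ)⁻¹) := by
  set P := insert 1 (squarefreeCoprime M N) ×ˢ Icc 1 N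
  have hsub : {n ∈ Icc 1 N | n.Coprime M} ⊆ P.image fun p ↦ p.2 ^ 2 * p.1 := by
    intro n hn
    obtain ⟨a, b, rfl, ha⟩ := Nat.sq_mul_squarefree n
    obtain ⟨hmem, hcop⟩ := mem_filter.1 hn
    obtain ⟨hpos, hle⟩ := mem_Icc.1 hmem
    have hb : b ≠ 0 := by rintro rfl; simp at hpos
    have hbN : b ≤ N :=
      (Nat.le_of_dvd hpos ((dvd_pow_self b two_ne_zero).mul_right a)).trans hle
    have haN : a ≤ N := (Nat.le_of_dvd hpos (dvd_mul_left a (b ^ 2))).trans hle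
    have hacop : a.Coprime M := hcop.coprime_dvd_left (dvd_mul_left a (b ^ 2))
    refine mem_image.2 ⟨(a, b), mem_product.2 ⟨?_, mem_Icc.2 ⟨by lia, hbN⟩⟩, rfl⟩
    have ha0 := ha.ne_zero
    rw [mem_insert, squarefreeCoprime, mem_filter, mem_Icc]
    by_cases ha1 : a = 1
    · exact .inl ha1
    · exact .inr ⟨⟨by lia, haN⟩, ha, hacop⟩
  have hinsert : ∑ q ∈ insert 1 (squarefreeCoprime M N), (q : ℝ)⁻¹ =
      1 + ∑ q ∈ squarefreeCoprime M N, (q : ℝ)⁻¹ := by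
    rw [sum_insert (by simp [squarefreeCoprime]), Nat.cast_one, inv_one]
  calc _ ≤ ∑ n ∈ (P.image fun p : ℕ × ℕ ↦ p.2 ^ 2 * p.1), ((n : ℕ) : ℝ)⁻¹ :=
        sum_le_sum_of_subset_of_nonneg hsub fun _ _ _ ↦ by positivity
    _ ≤ ∑ p ∈ P, ((p.2 ^ 2 * p.1 : ℕ) : ℝ)⁻¹ :=
        sum_image_le_of_nonneg fun _ _ ↦ by positivity
    _ = (∑ k ∈ Icc 1 N, ((k : ℝ) ^ 2)⁻¹) * (1 + ∑ q ∈ squarefreeCoprime M N, (q : ℝ)⁻¹) := by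
        rw [← hinsert, mul_comm, sum_mul_sum, sum_product]
        refine sum_congr rfl fun q _ ↦ sum_congr rfl fun k _ ↦ ?_
        push_cast
        rw [mul_inv, mul_comm]
    _ ≤ _ := by
        gcongr
        exact sum_Icc_one_inv_sq_le_two N

lemma tendsto_log_natCast_atTop : Tendsto (fun N : ℕ ↦ log N) atTop atTop :=
  tendsto_log_atTop.comp tendsto_natCast_atTop_atTop

lemma eventually_log_le_sum_inv_squarefreeCoprime {M : ℕ} (hM : M ≠ 0) :
    ∀ᶠ N : ℕ in atTop, log N / (4 * M) ≤ ∑ q ∈ squarefreeCoprime M N, (q : ℝ)⁻¹ := by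
  filter_upwards [tendsto_log_natCast_atTop.eventually_ge_atTop (2 * log M + 4 * M),
    eventually_ne_atTop 0] with N hlog hN
  have h := (log_div_div_le_sum_inv_coprime hM N).trans (sum_inv_coprime_le_two_mul M N)
  rw [log_div (by positivity) (by positivity), div_le_iff₀ (by positivity)] at h
  rw [div_le_iff₀ (by positivity)]
  linarith

end SquarefreeCoprime

section LargeSieve

lemma sq_sum_mul_norm_sum_mul_pow_le {ι : Type*} (s : Finset ι) {w : ι → ℝ} (hw : ∀ i, 0 ≤ w i)
    (z : ι → ℂ) (a : ℕ → ℂ) (X : ℕ) :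
    (∑ i ∈ s, w i * ‖∑ n ∈ range X, a n * z i ^ n‖) ^ 2 ≤ (∑ n ∈ range X, ‖a n‖ ^ 2) *
      ∑ i ∈ s, ∑ j ∈ s, w i * w j * ‖∑ n ∈ range X, (z i * conj (z j)) ^ n‖ := by
  let φ (i : ι) : EuclideanSpace ℂ (Fin X) := WithLp.toLp 2 fun n ↦ conj (z i) ^ (n : ℕ)
  let ξ : EuclideanSpace ℂ (Fin X) := WithLp.toLp 2 fun n ↦ a n
  have hφξ (i : ι) : inner ℂ (φ i) ξ = ∑ n ∈ range X, a n * z i ^ n := by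
    simp [φ, ξ, PiLp.inner_apply, Fin.sum_univ_eq_sum_range (fun n ↦ a n * z i ^ n)]
  have hφφ (i j : ι) : inner ℂ (φ i) (φ j) = ∑ n ∈ range X, (z i * conj (z j)) ^ n := by
    simp [φ, PiLp.inner_apply, mul_pow, mul_comm,
      Fin.sum_univ_eq_sum_range (fun n ↦ z i ^ n * conj (z j) ^ n)]
  have hξ : ‖ξ‖ ^ 2 = ∑ n ∈ range X, ‖a n‖ ^ 2 := by
    simp [ξ, EuclideanSpace.norm_sq_eq, Fin.sum_univ_eq_sum_range (fun n ↦ ‖a n‖ ^ 2)]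
  have h := sq_sum_norm_inner_le (𝕜 := ℂ) s (fun i ↦ (w i : ℂ) • φ i) ξ
  simpa only [inner_smul_left, inner_smul_right, hφξ, hφφ, hξ, norm_mul, RCLike.norm_conj,
    Complex.norm_of_nonneg (hw _), mul_assoc, mul_left_comm] using h

lemma norm_sum_rootOfUnity_mul_conj_pow_le {q r : ℕ} (hq : 2 ≤ q) (hr : 2 ≤ r) (hqr : q ≠ r)
    (X : ℕ) : ‖∑ n ∈ range X, (rootOfUnity q * conj (rootOfUnity r)) ^ n‖ ≤ q * r / 2 := by
  set z := rootOfUnity q * conj (rootOfUnity r) with hz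
  have hz1 : ‖z‖ ≤ 1 := by simp [hz, norm_rootOfUnity]
  have h := (mul_le_mul_of_nonneg_right
    (four_div_mul_le_norm_one_sub_rootOfUnity_mul_conj hq hr hqr) (norm_nonneg _)).trans
      (norm_one_sub_mul_norm_geom_sum_le hz1 X)
  rw [div_mul_eq_mul_div, div_le_iff₀ (by positivity)] at h
  linarith

lemma sum_sum_norm_sum_rootOfUnity_pow_le {Q : Finset ℕ} {N : ℕ} (hQ : Q ⊆ Icc 2 N) (X : ℕ) :
    ∑ q ∈ Q, ∑ r ∈ Q, (√q)⁻¹ * (√r)⁻¹ *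
        ‖∑ n ∈ range X, (rootOfUnity q * conj (rootOfUnity r)) ^ n‖ ≤
      X * ∑ q ∈ Q, (q : ℝ)⁻¹ + N ^ 3 := by
  have hterm : ∀ q ∈ Q, ∀ r ∈ Q, (√q)⁻¹ * (√r)⁻¹ *
      ‖∑ n ∈ range X, (rootOfUnity q * conj (rootOfUnity r)) ^ n‖ ≤
        (if q = r then X * (q : ℝ)⁻¹ else 0) + N := by
    intro q hq r hr
    obtain ⟨hq2, hqN⟩ := mem_Icc.1 (hQ hq)
    obtain ⟨hr2, hrN⟩ := mem_Icc.1 (hQ hr)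
    split_ifs with hqr
    · subst hqr
      have hgeom : ‖∑ n ∈ range X, (rootOfUnity q * conj (rootOfUnity q)) ^ n‖ ≤ X := by
        refine (norm_sum_le _ _).trans_eq ?_
        simp [norm_rootOfUnity]
      rw [← mul_inv, mul_self_sqrt (by positivity), mul_comm (X : ℝ)]
      exact le_add_of_le_of_nonneg (by gcongr) (by positivity)
    · calc _ ≤ (√q)⁻¹ * (√r)⁻¹ * (q * r) := by
            gcongr
            exact (norm_sum_rootOfUnity_mul_conj_pow_le hq2 hr2 hqr X).trans
              (half_le_self (by positivity))
        _ = √q * √r := by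
          rw [mul_mul_mul_comm, inv_mul_eq_div, inv_mul_eq_div, div_sqrt, div_sqrt]
        _ ≤ √N * √N := by gcongr
        _ = 0 + N := by rw [mul_self_sqrt (by positivity), zero_add]
  have hcard : (#Q : ℝ) ≤ N := by
    have := card_le_card hQ
    rw [Nat.card_Icc] at this
    exact_mod_cast this.trans (by lia)
  calc _ ≤ ∑ q ∈ Q, ∑ r ∈ Q, ((if q = r then X * (q : ℝ)⁻¹ else 0) + N) :=
        sum_le_sum fun q hq ↦ sum_le_sum fun r hr ↦ hterm q hq r hr
    _ = X * ∑ q ∈ Q, (q : ℝ)⁻¹ + #Q * (#Q * N) := by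
        simp [sum_add_distrib, mul_sum]
    _ ≤ X * ∑ q ∈ Q, (q : ℝ)⁻¹ + N * (N * N) := by gcongr
    _ = _ := by ring

theorem sq_sum_inv_sqrt_mul_norm_sum_le {Q : Finset ℕ} {N : ℕ} (hQ : Q ⊆ Icc 2 N)
    (a : ℕ → ℂ) (X : ℕ) :
    (∑ q ∈ Q, (√q)⁻¹ * ‖∑ n ∈ range X, a n * rootOfUnity q ^ n‖) ^ 2 ≤
      (∑ n ∈ range X, ‖a n‖ ^ 2) * (X * ∑ q ∈ Q, (q : ℝ)⁻¹ + N ^ 3) :=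
  (sq_sum_mul_norm_sum_mul_pow_le Q (w := fun q ↦ (√(q : ℝ))⁻¹) (fun _ ↦ by positivity)
    rootOfUnity a X).trans <| by gcongr; exact sum_sum_norm_sum_rootOfUnity_pow_le hQ X

end LargeSieve

section MeanSquare

lemma le_norm_sum_visibleError_mul_pow {q X : ℕ} {D : ℝ} (hq : 2 ≤ q) (hsq : Squarefree q)
    (hcop : q.Coprime (Nat.factorial 16)) (hX : 64 * (111 + 2 * |D|) * √q ^ 5 ≤ √X)
    (hE : |visibleError D √X| ≤ X) :
    √X ^ 3 * (√q)⁻¹ ≤ 448 * ‖∑ n ∈ range X, (visibleError D √n * rootOfUnity q ^ n : ℂ)‖ := by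
  have : NeZero q := ⟨by lia⟩
  set G := ‖∑ n ∈ range X, (visibleError D √n * rootOfUnity q ^ n : ℂ)‖
  have hq1 : 1 ≤ √(q : ℝ) := one_le_sqrt.2 (mod_cast one_le_two.trans hq)
  have hqs : (q : ℝ) = √q ^ 2 := (sq_sqrt (by positivity)).symm
  have hXs : (X : ℝ) = √X ^ 2 := (sq_sqrt (by positivity)).symm
  have hR : 1 ≤ √(X : ℝ) := by
    refine le_trans ?_ hX
    have := one_le_pow₀ hq1 (n := 5)
    nlinarith [abs_nonneg D]
  have hsqrt : √((X + 1 : ℕ) : ℝ) ≤ 2 * √X ^ 2 := by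
    rw [sqrt_le_left (by positivity), ← hXs]
    have hX1 : (1 : ℝ) ≤ X := one_le_sqrt.1 hR
    push_cast
    nlinarith
  have hlower : (111 + 2 * |D|) * √q ^ 2 * √X ^ 2 ≤ √X ^ 3 / (64 * √q ^ 3) := by
    rw [le_div_iff₀ (by positivity)]
    calc _ = 64 * (111 + 2 * |D|) * √q ^ 5 * √X ^ 2 := by ring
      _ ≤ √X * √X ^ 2 := by gcongr
      _ = √X ^ 3 := by ring
  have hbound : √X ^ 3 / (64 * √q ^ 3) ≤ 7 / √q ^ 2 * G := by
    have hupper := (le_norm_visibleSum hsq hcop hR).trans (norm_visibleSum_sqrt_le hq D X)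
    rw [hqs, sqrt_sq (by positivity)] at hupper
    have hD : |D| * (√q ^ 2 * √((X + 1 : ℕ) : ℝ)) ≤ |D| * (√q ^ 2 * (2 * √X ^ 2)) := by gcongr
    have hE' : |visibleError D √X| ≤ √q ^ 2 * √X ^ 2 :=
      (hE.trans_eq hXs).trans (le_mul_of_one_le_left (by positivity) (one_le_pow₀ hq1))
    have hhalf : √X ^ 3 / (32 * √q ^ 3) = √X ^ 3 / (64 * √q ^ 3) + √X ^ 3 / (64 * √q ^ 3) := by
      field_simp
      norm_num
    linarith
  calc _ = √X ^ 3 / (64 * √q ^ 3) * (64 * √q ^ 2) := by field_simp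
    _ ≤ 7 / √q ^ 2 * G * (64 * √q ^ 2) := by gcongr
    _ = 448 * G := by field_simp; ring

lemma sqrt_cube_mul_sum_inv_le {D : ℝ} {N X : ℕ} (hNX : N ^ 6 ≤ X)
    (hN : 64 * (111 + 2 * |D|) ≤ √N) (hE : |visibleError D √X| ≤ X) :
    √X ^ 3 * ∑ q ∈ squarefreeCoprime (Nat.factorial 16) N, (q : ℝ)⁻¹ ≤
      448 * ∑ q ∈ squarefreeCoprime (Nat.factorial 16) N,
        (√q)⁻¹ * ‖∑ n ∈ range X, (visibleError D √n * rootOfUnity q ^ n : ℂ)‖ := by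
  have hN6 : √(N : ℝ) ^ 6 ≤ √X := by
    refine le_sqrt_of_sq_le ?_
    rw [← pow_mul, mul_comm, pow_mul, sq_sqrt (by positivity)]
    exact_mod_cast hNX
  rw [mul_sum, mul_sum]
  refine sum_le_sum fun q hq ↦ ?_
  obtain ⟨hmem, hsq, hcop⟩ := mem_filter.1 hq
  obtain ⟨hq2, hqN⟩ := mem_Icc.1 hmem
  have hX : 64 * (111 + 2 * |D|) * √q ^ 5 ≤ √X := by
    calc _ ≤ √N * √N ^ 5 := by gcongr
      _ ≤ √X := by rwa [← pow_succ']
  calc √X ^ 3 * (q : ℝ)⁻¹ = (√q)⁻¹ * (√X ^ 3 * (√q)⁻¹) := by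
        rw [mul_left_comm, ← mul_inv, mul_self_sqrt (by positivity)]
    _ ≤ (√q)⁻¹ * (448 * ‖∑ n ∈ range X, (visibleError D √n * rootOfUnity q ^ n : ℂ)‖) :=
        mul_le_mul_of_nonneg_left (le_norm_sum_visibleError_mul_pow hq2 hsq hcop hX hE)
          (by positivity)
    _ = _ := mul_left_comm ..

lemma sq_mul_sum_inv_le_sum_visibleError_sq {D : ℝ} {N X : ℕ} (hNX : N ^ 6 ≤ X)
    (hN : 64 * (111 + 2 * |D|) ≤ √N) (hE : |visibleError D √X| ≤ X)
    (hS : 1 ≤ ∑ q ∈ squarefreeCoprime (Nat.factorial 16) N, (q : ℝ)⁻¹) :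
    (X : ℝ) ^ 2 * ∑ q ∈ squarefreeCoprime (Nat.factorial 16) N, (q : ℝ)⁻¹ ≤
      2 * 448 ^ 2 * ∑ n ∈ range X, visibleError D √n ^ 2 := by
  have hlower := sqrt_cube_mul_sum_inv_le hNX hN hE
  have hupper := sq_sum_inv_sqrt_mul_norm_sum_le
    (squarefreeCoprime_subset_Icc (Nat.factorial 16) N) (fun n ↦ (visibleError D √n : ℂ)) X
  simp only [Complex.norm_real, norm_eq_abs, sq_abs] at hupper
  set S := ∑ q ∈ squarefreeCoprime (Nat.factorial 16) N, (q : ℝ)⁻¹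
  set V := ∑ n ∈ range X, visibleError D √n ^ 2
  have hN0 : 0 < N := Nat.pos_of_ne_zero fun h ↦ by
    simp only [h, Nat.cast_zero, sqrt_zero] at hN
    linarith [abs_nonneg D]
  have hN3 : (N : ℝ) ^ 3 ≤ X := mod_cast (Nat.pow_le_pow_right hN0 (by norm_num)).trans hNX
  have hX0 : (0 : ℝ) < X := lt_of_lt_of_le (by positivity) hN3
  refine le_of_mul_le_mul_right ?_ (by positivity : 0 < X * S)
  calc (X : ℝ) ^ 2 * S * (X * S) = (√X ^ 3 * S) ^ 2 := by
        rw [mul_pow, ← pow_mul, mul_comm 3, pow_mul, sq_sqrt hX0.le]; ring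
    _ ≤ (448 * _) ^ 2 := pow_le_pow_left₀ (by positivity) hlower 2
    _ ≤ 448 ^ 2 * (V * (X * S + N ^ 3)) := by rw [mul_pow]; gcongr
    _ ≤ 448 ^ 2 * (V * (X * S + X * S)) := by
      gcongr
      exact hN3.trans (le_mul_of_one_le_right hX0.le hS)
    _ = 2 * 448 ^ 2 * V * (X * S) := by ring

theorem exists_frequently_le_sum_visibleError_sq : ∃ c > (0 : ℝ), ∀ D : ℝ,
    (∀ᶠ R in atTop, |visibleError D R| ≤ R ^ 2) → ∃ᶠ X : ℕ in atTop,
      c * X ^ 2 * log X ≤ ∑ n ∈ range X, visibleError D √n ^ 2 := by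
  set M := Nat.factorial 16
  have hM : M ≠ 0 := Nat.factorial_ne_zero 16
  refine ⟨(48 * M * 448 ^ 2)⁻¹, by positivity, fun D hE ↦ ?_⟩
  have hpow : Tendsto (fun N : ℕ ↦ N ^ 6) atTop atTop := tendsto_pow_atTop (by norm_num)
  have hsqrt : Tendsto (fun N : ℕ ↦ √(N : ℝ)) atTop atTop :=
    tendsto_sqrt_atTop.comp tendsto_natCast_atTop_atTop
  refine hpow.frequently (Eventually.frequently ?_)
  filter_upwards [eventually_log_le_sum_inv_squarefreeCoprime hM,
    tendsto_log_natCast_atTop.eventually_ge_atTop (4 * M),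
    hsqrt.eventually_ge_atTop (64 * (111 + 2 * |D|)),
    (hsqrt.comp hpow).eventually hE] with N hS hlog hN hEN
  rw [Function.comp_apply, sq_sqrt (by positivity)] at hEN
  have h := sq_mul_sum_inv_le_sum_visibleError_sq le_rfl hN hEN
    (le_trans ((one_le_div (by positivity)).2 hlog) hS)
  calc _ = ((N ^ 6 : ℕ) : ℝ) ^ 2 * (log N / (4 * M)) / (2 * 448 ^ 2) := by
        push_cast; rw [log_pow]; field_simp; ring
    _ ≤ _ := by
      rw [div_le_iff₀' (by positivity)]
      exact le_trans (by gcongr) h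

end MeanSquare

section Omega

lemma eventually_sum_range_le_of_eventually_le {a : ℕ → ℝ} {c : ℝ} (hc : 0 < c)
    (ha : ∀ᶠ n : ℕ in atTop, a n ≤ c * n * log n) :
    ∀ᶠ X : ℕ in atTop, ∑ n ∈ range X, a n ≤ 2 * c * X ^ 2 * log X := by
  obtain ⟨m, hm⟩ := eventually_atTop.1 ha
  filter_upwards [eventually_ge_atTop (max m 1),
    tendsto_log_natCast_atTop.eventually_ge_atTop ((∑ n ∈ range m, a n) / c)] with X hX hlog
  obtain ⟨hmX, hX1⟩ := max_le_iff.1 hX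
  rw [div_le_iff₀ hc] at hlog
  have hhead : ∑ n ∈ range m, a n ≤ c * X ^ 2 * log X := by
    have hX2 : (1 : ℝ) ≤ X ^ 2 := one_le_pow₀ (mod_cast hX1)
    calc _ ≤ 1 * (log X * c) := by rwa [one_mul]
      _ ≤ X ^ 2 * (log X * c) := by gcongr
      _ = _ := by ring
  have htail : ∑ n ∈ Ico m X, a n ≤ c * X ^ 2 * log X := by
    calc _ ≤ ∑ _n ∈ Ico m X, c * X * log X := by
          refine sum_le_sum fun n hn ↦ (hm n (mem_Ico.1 hn).1).trans ?_
          have hnX : n ≤ X := (mem_Ico.1 hn).2.le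
          obtain rfl | hn0 := n.eq_zero_or_pos
          · simp only [Nat.cast_zero, mul_zero, zero_mul]
            positivity
          · gcongr
      _ ≤ X * (c * X * log X) := by
          rw [sum_const, Nat.card_Ico, nsmul_eq_mul]
          gcongr
          exact Nat.sub_le X m
      _ = _ := by ring
  rw [← sum_range_add_sum_Ico a hmX]
  linarith

lemma eventually_sq_sqrt_le_of_abs_le_mul_sqrt_log {f : ℝ → ℝ} {c : ℝ}
    (hf : ∀ᶠ R in atTop, |f R| ≤ c * R * √(log R)) :
    ∀ᶠ n : ℕ in atTop, f √n ^ 2 ≤ c ^ 2 / 2 * n * log n := by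
  have hsqrt : Tendsto (fun n : ℕ ↦ √(n : ℝ)) atTop atTop :=
    tendsto_sqrt_atTop.comp tendsto_natCast_atTop_atTop
  filter_upwards [hsqrt.eventually hf, eventually_ge_atTop 1] with n hn hn1
  have hlog : 0 ≤ log (√(n : ℝ)) := log_nonneg (one_le_sqrt.2 (mod_cast hn1))
  calc f √n ^ 2 = |f √n| ^ 2 := (sq_abs _).symm
    _ ≤ (c * √n * √(log √n)) ^ 2 := by gcongr
    _ = c ^ 2 / 2 * n * log n := by
      rw [mul_pow, mul_pow, sq_sqrt n.cast_nonneg, sq_sqrt hlog, log_sqrt n.cast_nonneg]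
      ring

lemma eventually_abs_le_sq_of_abs_le_mul_sqrt_log {f : ℝ → ℝ} {c : ℝ}
    (hf : ∀ᶠ R in atTop, |f R| ≤ c * R * √(log R)) : ∀ᶠ R in atTop, |f R| ≤ R ^ 2 := by
  filter_upwards [hf, eventually_ge_atTop (c ^ 2), eventually_ge_atTop 1] with R hR hc hR1
  have hR0 : 0 ≤ R := zero_le_one.trans hR1
  have hsq : (c * √(log R)) ^ 2 ≤ R ^ 2 := by
    rw [mul_pow, sq_sqrt (log_nonneg hR1), sq R]
    exact mul_le_mul hc (log_le_self hR0) (log_nonneg hR1) hR0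
  have hsqrt : c * √(log R) ≤ R := (abs_le_of_sq_le_sq' hsq hR0).2
  calc |f R| ≤ R * (c * √(log R)) := hR.trans_eq (by ring)
    _ ≤ R * R := by gcongr
    _ = R ^ 2 := (sq R).symm

theorem Estar_Omega_general :
    ∃ c > (0 : ℝ), ∀ D R₀ : ℝ, ∃ R ≥ R₀, c * R * √(log R) ≤ |(Nstar R : ℝ) - D * R ^ 3| := by
  obtain ⟨C, hC, hmean⟩ := exists_frequently_le_sum_visibleError_sq
  refine ⟨√C / 2, by positivity, fun D R₀ ↦ ?_⟩
  by_contra! hsmall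
  have hE : ∀ᶠ R in atTop, |visibleError D R| ≤ √C / 2 * R * √(log R) :=
    (eventually_ge_atTop R₀).mono fun R hR ↦ (hsmall R hR).le
  have hupper := eventually_sum_range_le_of_eventually_le (by positivity)
    (eventually_sq_sqrt_le_of_abs_le_mul_sqrt_log hE)
  obtain ⟨X, hlower, hupper, hX⟩ := ((hmean D
    (eventually_abs_le_sq_of_abs_le_mul_sqrt_log hE)).and_eventually
      (hupper.and (eventually_ge_atTop 2))).exists
  have hlog : 0 < (X : ℝ) ^ 2 * log X :=
    mul_pos (by positivity) (log_pos (mod_cast hX))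
  rw [div_pow, sq_sqrt hC.le] at hupper
  nlinarith

end Omega

theorem Estar_Omega :
    ∃ c > (0:ℝ), ∀ R₀ > (1:ℝ), ∃ R ≥ R₀, c * R * Real.sqrt (Real.log R) ≤ |Estar R| := by
  obtain ⟨c, hc, h⟩ := Estar_Omega_general
  exact ⟨c, hc, fun R₀ _ ↦ h _ R₀⟩
end

section
/- Let F(x) = ∑_{n=2}^∞ τ(n) e(p_n³ x) / (n² (log n)^{2023}) for x ∈ ℝ, where the series converges absolutely and uniformly. Then for every x₀ ∈ ℝ there do not exist constants C > 0 and δ > 0 such that |F(x) − F(x₀)| ≤ C|x − x₀| for all x with |x − x₀| < δ; in particular, F is not differentiable at any point of ℝ. -/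
open Real

/-- `e(x) = e^{2πix}`. -/
noncomputable def e (x : ℝ) : ℂ := Complex.exp (2 * π * Complex.I * x)

/-- `F(x) = ∑_{n=2}^∞ τ(n) e(pₙ³ x) / (n² (log n)^2023)`, where `pₙ` is the `n`-th prime
(`Nat.nth Nat.Prime (n-1)`) and `τ(n)` the number of divisors of `n`. -/
noncomputable def F (x : ℝ) : ℂ :=
  ∑' n : ℕ, ((n + 2).divisors.card : ℂ) * e ((Nat.nth Nat.Prime (n + 1) : ℝ)^3 * x) /
    (((n : ℂ) + 2)^2 * ((Real.log ((n : ℝ) + 2) : ℂ))^2023)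

/-!
Suppose that `F(x) - F(x₀) = O(|x - x₀|)`. Take a Schwartz function `φ` whose inverse Fourier
transform is `1` at `0` and vanishes outside the unit ball. If the frequency `ξₖ` of a trigonometric
series `f` is at distance at least `R` from all the other frequencies and from `0`, then integrating
`f(x₀ + x / R) - f(x₀)` against `φ(x) e(-ξₖ x / R)` isolates the `k`-th coefficient, while
`∫ |x| |φ(x)| dx < ∞` shows that the integral is `O(1 / R)`.

For `F` the frequencies are the cubes `pₙ³`, for which `R = n²` is allowed, so `τ(n)` would be
`O((log n)^2023)`. This fails along the powers `Pᵐ` of an integer `P` with `2024` prime factors, as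
`τ(Pᵐ) ≥ (m + 1)^2024`.
-/

open Filter Topology Asymptotics MeasureTheory FourierTransform SchwartzMap RealInnerProductSpace
open scoped ArithmeticFunction.zeta

lemma isBigO_top_of_bounded_of_isBigO_nhds {V E : Type*} [SeminormedAddCommGroup V]
    [SeminormedAddCommGroup E] {g : V → E} {x₀ : V} {M : ℝ} (hM : ∀ x, ‖g x‖ ≤ M)
    (h : g =O[𝓝 x₀] (· - x₀)) : g =O[⊤] (· - x₀) := by
  obtain ⟨C, hC⟩ := h.bound
  obtain ⟨δ, hδ, hball⟩ := Metric.eventually_nhds_iff.1 hC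
  refine isBigO_top.2 ⟨max C (M / δ), fun x => ?_⟩
  rcases lt_or_ge (dist x x₀) δ with hx | hx
  · exact (hball hx).trans (by gcongr; exact le_max_left _ _)
  · rw [dist_eq_norm] at hx
    have hM₀ : 0 ≤ M := (norm_nonneg _).trans (hM x)
    calc ‖g x‖ ≤ M / δ * δ := by rw [div_mul_cancel₀ _ hδ.ne']; exact hM x
      _ ≤ max C (M / δ) * ‖x - x₀‖ := by gcongr; exact le_max_right _ _

section TrigSeries

variable {ι V E : Type*} [NormedAddCommGroup V] [InnerProductSpace ℝ V]
  [NormedAddCommGroup E] [NormedSpace ℂ E] {ξ : ι → V} {c : ι → E}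

/-- The trigonometric series `x ↦ ∑ₙ e(⟪x, ξₙ⟫) cₙ`, with arbitrary frequencies `ξₙ` in a real
inner product space and vector-valued coefficients `cₙ`. -/
noncomputable def trigSeries (ξ : ι → V) (c : ι → E) (x : V) : E :=
  ∑' n, 𝐞 ⟪x, ξ n⟫ • c n

lemma trigSeries_add (x₀ x : V) :
    trigSeries ξ c (x₀ + x) = trigSeries ξ (fun n => 𝐞 ⟪x₀, ξ n⟫ • c n) x := by
  simp only [trigSeries, inner_add_left, AddChar.map_add_eq_mul, mul_comm (𝐞 ⟪x₀, _⟫), mul_smul]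

lemma trigSeries_smul (r : ℝ) (x : V) :
    trigSeries ξ c (r • x) = trigSeries (fun n => r • ξ n) c x := by
  simp only [trigSeries, real_inner_smul_left, real_inner_smul_right]

lemma fourierChar_smul_trigSeries (μ x : V) :
    𝐞 ⟪x, μ⟫ • trigSeries ξ c x = trigSeries (fun n => ξ n + μ) c x := by
  simp only [trigSeries, inner_add_right, AddChar.map_add_eq_mul, mul_comm _ (𝐞 ⟪x, μ⟫), mul_smul]
  exact (tsum_const_smul' _).symm

lemma norm_trigSeries_le (hc : Summable fun n => ‖c n‖) (x : V) :
    ‖trigSeries ξ c x‖ ≤ ∑' n, ‖c n‖ :=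
  tsum_of_norm_bounded hc.hasSum fun _ => (Circle.norm_smul _ _).le

variable [CompleteSpace E]

lemma continuous_trigSeries (hc : Summable fun n => ‖c n‖) : Continuous (trigSeries ξ c) :=
  continuous_tsum (fun _ => by fun_prop) hc fun _ _ => (Circle.norm_smul _ _).le

end TrigSeries

section FrequencyGap

variable {V : Type*} [NormedAddCommGroup V] [InnerProductSpace ℝ V] [FiniteDimensional ℝ V]
  {ι E : Type*} [NormedAddCommGroup E] [NormedSpace ℂ E] [CompleteSpace E] {ξ : ι → V} {c : ι → E}

section Measure

variable [MeasurableSpace V] [BorelSpace V]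

variable (V) in
lemma exists_schwartzMap_fourierInv_eq_one_and_eq_zero :
    ∃ φ : 𝓢(V, ℂ), 𝓕⁻ (φ : V → ℂ) 0 = 1 ∧ ∀ ω, 1 ≤ ‖ω‖ → 𝓕⁻ (φ : V → ℂ) ω = 0 := by
  let b : ContDiffBump (0 : V) := ⟨1 / 2, 1, by norm_num, by norm_num⟩
  have hsupp : HasCompactSupport fun x => (b x : ℂ) :=
    b.hasCompactSupport.comp_left Complex.ofReal_zero
  let ψ : 𝓢(V, ℂ) := hsupp.toSchwartzMap (Complex.ofRealCLM.contDiff.comp b.contDiff)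
  have hinv (x : V) : 𝓕⁻ ((𝓕 ψ : 𝓢(V, ℂ)) : V → ℂ) x = b x := by
    rw [← SchwartzMap.fourierInv_coe, fourierInv_fourier_eq]
    rfl
  refine ⟨𝓕 ψ, ?_, fun ω hω => ?_⟩
  · rw [hinv, b.one_of_mem_closedBall (Metric.mem_closedBall_self b.rIn_pos.le),
      Complex.ofReal_one]
  · rw [hinv, b.zero_of_le_dist (by rwa [dist_zero_right]), Complex.ofReal_zero]

lemma integral_smul_fourierChar_smul (φ : V → ℂ) (ω : V) (y : E) :
    ∫ x, φ x • 𝐞 ⟪x, ω⟫ • y = 𝓕⁻ φ ω • y := by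
  simp_rw [smul_comm (φ _) (𝐞 _), ← smul_assoc (𝐞 _)]
  rw [integral_smul_const, Real.fourierInv_eq]

lemma integral_smul_trigSeries [Countable ι] {φ : V → ℂ} (hφ : Integrable φ)
    (hc : Summable fun n => ‖c n‖) :
    ∫ x, φ x • trigSeries ξ c x = ∑' n, 𝓕⁻ φ (ξ n) • c n := by
  have hint (n : ι) : Integrable fun x => φ x • 𝐞 ⟪x, ξ n⟫ • c n :=
    hφ.smul_bdd ‖c n‖ (Continuous.aestronglyMeasurable (by fun_prop))
      (ae_of_all _ fun _ => (Circle.norm_smul _ _).le)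
  have hsum : Summable fun n => ∫ x, ‖φ x • 𝐞 ⟪x, ξ n⟫ • c n‖ := by
    simpa only [norm_smul, Circle.norm_smul, integral_mul_const] using
      hc.mul_left (∫ x, ‖φ x‖)
  calc ∫ x, φ x • trigSeries ξ c x
      = ∫ x, ∑' n, φ x • 𝐞 ⟪x, ξ n⟫ • c n := by
        simp only [trigSeries, tsum_const_smul'']
    _ = ∑' n, ∫ x, φ x • 𝐞 ⟪x, ξ n⟫ • c n :=
        (integral_tsum_of_summable_integral_norm hint hsum).symm
    _ = ∑' n, 𝓕⁻ φ (ξ n) • c n := by simp only [integral_smul_fourierChar_smul]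

lemma integral_smul_fourierChar_smul_trigSeries_sub [Countable ι] {φ : V → ℂ}
    (hφ : Integrable φ) (h₀ : 𝓕⁻ φ 0 = 1) (h₁ : ∀ ω, 1 ≤ ‖ω‖ → 𝓕⁻ φ ω = 0)
    (hc : Summable fun n => ‖c n‖) {k : ι} (hk : 1 ≤ ‖ξ k‖)
    (hgap : ∀ n ≠ k, 1 ≤ ‖ξ n - ξ k‖) (y : E) :
    ∫ x, φ x • 𝐞 ⟪x, -ξ k⟫ • (trigSeries ξ c x - y) = c k := by
  have hcont : Continuous (trigSeries (fun n => ξ n + -ξ k) c) := continuous_trigSeries hc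
  simp only [smul_sub, fourierChar_smul_trigSeries]
  rw [integral_sub, integral_smul_trigSeries hφ hc, integral_smul_fourierChar_smul,
    h₁ (-ξ k) (by rwa [norm_neg]), zero_smul, sub_zero, tsum_eq_single k, add_neg_cancel, h₀,
    one_smul]
  · intro n hn
    rw [← sub_eq_add_neg, h₁ _ (hgap n hn), zero_smul]
  · exact hφ.smul_bdd _ hcont.aestronglyMeasurable (ae_of_all _ (norm_trigSeries_le hc))
  · exact hφ.smul_bdd ‖y‖ (Continuous.aestronglyMeasurable (by fun_prop))
      (ae_of_all _ fun _ => (Circle.norm_smul _ _).le)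

lemma norm_coeff_le_of_one_le_gap [Countable ι] {φ : 𝓢(V, ℂ)}
    (h₀ : 𝓕⁻ (φ : V → ℂ) 0 = 1) (h₁ : ∀ ω, 1 ≤ ‖ω‖ → 𝓕⁻ (φ : V → ℂ) ω = 0)
    (hc : Summable fun n => ‖c n‖) {k : ι} (hk : 1 ≤ ‖ξ k‖)
    (hgap : ∀ n ≠ k, 1 ≤ ‖ξ n - ξ k‖) {y : E} {K : ℝ}
    (hK : ∀ x, ‖trigSeries ξ c x - y‖ ≤ K * ‖x‖) :
    ‖c k‖ ≤ K * ∫ x, ‖x‖ * ‖φ x‖ := by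
  have hφ : Integrable fun x => ‖x‖ * ‖φ x‖ := by simpa using φ.integrable_pow_mul volume 1
  rw [← integral_smul_fourierChar_smul_trigSeries_sub φ.integrable h₀ h₁ hc hk hgap y,
    ← integral_const_mul]
  refine norm_integral_le_of_norm_le (hφ.const_mul K) (ae_of_all _ fun x => ?_)
  rw [norm_smul, Circle.norm_smul, ← mul_assoc, mul_comm]
  gcongr
  exact hK x

lemma norm_coeff_mul_le_of_le_gap [Countable ι] {φ : 𝓢(V, ℂ)}
    (h₀ : 𝓕⁻ (φ : V → ℂ) 0 = 1) (h₁ : ∀ ω, 1 ≤ ‖ω‖ → 𝓕⁻ (φ : V → ℂ) ω = 0)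
    (hc : Summable fun n => ‖c n‖) {R : ℝ} (hR : 0 < R) {k : ι}
    (hk : R ≤ ‖ξ k‖) (hgap : ∀ n ≠ k, R ≤ ‖ξ n - ξ k‖) {x₀ : V} {y : E} {K : ℝ}
    (hK : ∀ x, ‖trigSeries ξ c x - y‖ ≤ K * ‖x - x₀‖) :
    ‖c k‖ * R ≤ K * ∫ x, ‖x‖ * ‖φ x‖ := by
  have hscale {v : V} (hv : R ≤ ‖v‖) : 1 ≤ ‖R⁻¹ • v‖ := by
    rwa [norm_smul, norm_inv, norm_of_nonneg hR.le, inv_mul_eq_div, one_le_div hR]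
  have key := norm_coeff_le_of_one_le_gap (ξ := fun n => R⁻¹ • ξ n)
    (c := fun n => 𝐞 ⟪x₀, ξ n⟫ • c n) (K := K / R) (y := y) h₀ h₁
    (by simpa only [Circle.norm_smul] using hc) (hscale hk)
    (fun n hn => by simpa only [smul_sub] using hscale (hgap n hn))
    (fun x => by
      have := hK (x₀ + R⁻¹ • x)
      rwa [trigSeries_add, trigSeries_smul, add_sub_cancel_left, norm_smul, norm_inv,
        norm_of_nonneg hR.le, ← mul_assoc, ← div_eq_mul_inv] at this)
  rwa [Circle.norm_smul, div_mul_eq_mul_div, le_div_iff₀ hR] at key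

end Measure

theorem exists_norm_coeff_mul_le_of_isBigO_sub [Countable ι]
    (hc : Summable fun n => ‖c n‖) {x₀ : V}
    (h : (trigSeries ξ c · - trigSeries ξ c x₀) =O[𝓝 x₀] (· - x₀)) :
    ∃ K : ℝ, ∀ k, ∀ R > 0, R ≤ ‖ξ k‖ → (∀ n ≠ k, R ≤ ‖ξ n - ξ k‖) → ‖c k‖ * R ≤ K := by
  borelize V
  obtain ⟨φ, h₀, h₁⟩ := exists_schwartzMap_fourierInv_eq_one_and_eq_zero V
  obtain ⟨K, hK⟩ := isBigO_top.1 <| isBigO_top_of_bounded_of_isBigO_nhds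
    (fun x => (norm_sub_le _ _).trans
      (add_le_add (norm_trigSeries_le hc x) (norm_trigSeries_le hc x₀))) h
  exact ⟨_, fun k R hR hk hgap => norm_coeff_mul_le_of_le_gap h₀ h₁ hc hR hk hgap hK⟩

end FrequencyGap

lemma pow_card_primeFactors_le_card_divisors_pow {P : ℕ} (hP : P ≠ 0) (m : ℕ) :
    (m + 1) ^ P.primeFactors.card ≤ (P ^ m).divisors.card := by
  rcases eq_or_ne m 0 with rfl | hm
  · simp
  rw [Nat.card_divisors (pow_ne_zero m hP), Nat.primeFactors_pow _ hm, ← Finset.prod_const]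
  refine Finset.prod_le_prod' fun q hq => ?_
  have hq₁ : 1 ≤ P.factorization q := (Nat.prime_of_mem_primeFactors hq).factorization_pos_of_dvd
    hP (Nat.dvd_of_mem_primeFactors hq)
  simpa using Nat.le_mul_of_pos_right m hq₁

lemma exists_card_primeFactors_eq (r : ℕ) : ∃ P ≠ 0, P.primeFactors.card = r := by
  obtain ⟨s, hs, rfl⟩ := Nat.infinite_setOfPred_prime.exists_subset_card_eq r
  have hs' : ∀ p ∈ s, p.Prime := fun p hp => hs hp
  exact ⟨∏ p ∈ s, p, Finset.prod_ne_zero_iff.2 fun p hp => (hs' p hp).ne_zero,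
    by rw [Nat.primeFactors_prod hs']⟩

lemma not_isBigO_card_divisors_log_pow (k : ℕ) :
    ¬ (fun n : ℕ => (n.divisors.card : ℝ)) =O[atTop] fun n => log n ^ k := by
  intro h
  obtain ⟨P, hP₀, hP⟩ := exists_card_primeFactors_eq (k + 1)
  have hP₁ : 1 < P := Nat.nonempty_primeFactors.1 (Finset.card_pos.1 (by omega))
  have hpow : (fun m : ℕ => (m : ℝ) ^ (k + 1)) =O[atTop] fun m : ℕ => (m : ℝ) ^ k :=
    calc (fun m : ℕ => (m : ℝ) ^ (k + 1))
        =O[atTop] fun m : ℕ => ((P ^ m).divisors.card : ℝ) := by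
          refine .of_bound' (.of_forall fun m => ?_)
          rw [norm_of_nonneg (by positivity), norm_of_nonneg (by positivity), ← hP]
          exact_mod_cast (Nat.pow_le_pow_left m.le_succ _).trans
            (pow_card_primeFactors_le_card_divisors_pow hP₀ m)
      _ =O[atTop] fun m : ℕ => log (P ^ m : ℕ) ^ k :=
          h.comp_tendsto (tendsto_pow_atTop_atTop_of_one_lt hP₁)
      _ = fun m : ℕ => log P ^ k * (m : ℝ) ^ k := by
          ext m; rw [Nat.cast_pow, log_pow, mul_pow, mul_comm]
      _ =O[atTop] fun m : ℕ => (m : ℝ) ^ k := isBigO_const_mul_self _ _ _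
  have hlt : (fun m : ℕ => (m : ℝ) ^ k) =o[atTop] fun m : ℕ => (m : ℝ) ^ (k + 1) :=
    (isLittleO_pow_pow_atTop_of_lt k.lt_succ_self).comp_tendsto tendsto_natCast_atTop_atTop
  exact isLittleO_irrefl ((eventually_ne_atTop 0).mono fun m hm => by positivity).frequently
    (hpow.trans_isLittleO hlt)

lemma zeta_mul_zeta_apply {R : Type*} [Semiring R] (n : ℕ) :
    ((ζ : ArithmeticFunction R) * (ζ : ArithmeticFunction R)) n = n.divisors.card := by
  rw [← ArithmeticFunction.natCoe_mul, ArithmeticFunction.natCoe_apply,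
    ← ArithmeticFunction.sigma_zero_apply, ← ArithmeticFunction.zeta_mul_pow_eq_sigma,
    ArithmeticFunction.pow_zero_eq_zeta]

lemma summable_card_divisors_div_rpow {s : ℝ} (hs : 1 < s) :
    Summable fun n : ℕ => (n.divisors.card : ℝ) / (n : ℝ) ^ s := by
  have hζ : LSeriesSummable (fun n => (ζ : ArithmeticFunction ℂ) n) s :=
    ArithmeticFunction.LSeriesSummable_zeta_iff.2 (by simpa using hs)
  refine (ArithmeticFunction.LSeriesSummable_mul hζ hζ).norm.congr fun n => ?_
  rw [LSeries.norm_term_eq, zeta_mul_zeta_apply, Complex.norm_natCast, Complex.ofReal_re]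
  split_ifs with hn <;> simp [hn]

lemma pow_le_abs_pow_succ_sub_pow_succ {R : Type*} [CommRing R] [LinearOrder R]
    [IsStrictOrderedRing R] {a b : R} (ha : 0 ≤ a) (hb : 0 ≤ b) (hab : 1 ≤ |b - a|) (k : ℕ) :
    a ^ k ≤ |b ^ (k + 1) - a ^ (k + 1)| := by
  set S := ∑ i ∈ Finset.range (k + 1), b ^ i * a ^ (k - i)
  have hS : a ^ k ≤ S := by
    simpa using Finset.single_le_sum (f := fun i => b ^ i * a ^ (k - i))
      (fun _ _ => by positivity) (Finset.mem_range.2 k.succ_pos)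
  have hS₀ : 0 ≤ S := (pow_nonneg ha k).trans hS
  calc a ^ k ≤ S * |b - a| := hS.trans (le_mul_of_one_le_right hS₀ hab)
    _ = |S * (b - a)| := by rw [abs_mul, abs_of_nonneg hS₀]
    _ = |b ^ (k + 1) - a ^ (k + 1)| := by rw [← geom_sum₂_mul]; rfl

/-- The frequency `pₙ₊₂³` of the `n`-th term of `F`; `Nat.nth` counts the primes from `0`. -/
noncomputable def primeCube (n : ℕ) : ℝ := (Nat.nth Nat.Prime (n + 1) : ℝ) ^ 3

/-- The coefficient `τ(n) / (n² (log n)^A)`, for which `F` has `A = 2023`. The index is that of the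
paper, so the `n`-th term of `F` has the coefficient `divisorCoeff 2023 (n + 2)`. -/
noncomputable def divisorCoeff (A n : ℕ) : ℂ :=
  n.divisors.card / ((n : ℂ) ^ 2 * (log n : ℂ) ^ A)

lemma norm_divisorCoeff (A n : ℕ) :
    ‖divisorCoeff A n‖ = n.divisors.card / ((n : ℝ) ^ 2 * log n ^ A) := by
  rw [divisorCoeff, norm_div, norm_mul, norm_pow, norm_pow, Complex.norm_natCast,
    Complex.norm_natCast, Complex.norm_of_nonneg (log_natCast_nonneg n)]

lemma summable_norm_divisorCoeff (A : ℕ) : Summable fun n => ‖divisorCoeff A n‖ := by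
  refine summable_of_isBigO_nat (summable_card_divisors_div_rpow one_lt_two) (.of_bound' ?_)
  filter_upwards [eventually_ge_atTop 3] with n hn
  have hlog : 1 ≤ log n := by
    rw [le_log_iff_exp_le (by positivity)]
    exact exp_one_lt_three.le.trans (by exact_mod_cast hn)
  rw [norm_norm, norm_divisorCoeff, rpow_two, norm_of_nonneg (by positivity)]
  gcongr
  exact le_mul_of_one_le_right (by positivity) (one_le_pow₀ hlog)

lemma add_two_le_nth_prime_succ (n : ℕ) : (n : ℝ) + 2 ≤ Nat.nth Nat.Prime (n + 1) := by
  exact_mod_cast (Nat.le_succ _).trans (Nat.add_two_le_nth_prime (n + 1))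

lemma sq_le_primeCube (n : ℕ) : ((n : ℝ) + 2) ^ 2 ≤ primeCube n := by
  have hp := add_two_le_nth_prime_succ n
  have hp₁ : (1 : ℝ) ≤ Nat.nth Nat.Prime (n + 1) := by linarith [n.cast_nonneg (α := ℝ)]
  calc ((n : ℝ) + 2) ^ 2 ≤ (Nat.nth Nat.Prime (n + 1) : ℝ) ^ 2 := by gcongr
    _ ≤ primeCube n := pow_le_pow_right₀ hp₁ (by norm_num)

lemma sq_le_abs_primeCube_sub {m n : ℕ} (hmn : m ≠ n) :
    ((n : ℝ) + 2) ^ 2 ≤ |primeCube m - primeCube n| := by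
  have hne : (Nat.nth Nat.Prime (m + 1) : ℤ) - Nat.nth Nat.Prime (n + 1) ≠ 0 := by
    rw [sub_ne_zero, Nat.cast_injective.ne_iff]
    exact (Nat.nth_injective Nat.infinite_setOfPred_prime).ne (by omega)
  refine (pow_le_pow_left₀ (by positivity) (add_two_le_nth_prime_succ n) 2).trans
    (pow_le_abs_pow_succ_sub_pow_succ (Nat.cast_nonneg _) (Nat.cast_nonneg _) ?_ 2)
  exact_mod_cast Int.one_le_abs hne

lemma not_isBigO_trigSeries_primeCube_sub (A : ℕ) (x₀ : ℝ) :
    ¬ (fun x => trigSeries primeCube (fun n => divisorCoeff A (n + 2)) x -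
      trigSeries primeCube (fun n => divisorCoeff A (n + 2)) x₀) =O[𝓝 x₀] (· - x₀) := by
  intro h
  have hc : Summable fun n => ‖divisorCoeff A (n + 2)‖ :=
    (summable_nat_add_iff 2).2 (summable_norm_divisorCoeff A)
  obtain ⟨K, hK⟩ := exists_norm_coeff_mul_le_of_isBigO_sub hc h
  have hcoeff (n : ℕ) : ‖divisorCoeff A (n + 2)‖ * ((n : ℝ) + 2) ^ 2 ≤ K :=
    hK n _ (by positivity) ((sq_le_primeCube n).trans (le_norm_self _))
      fun m hm => sq_le_abs_primeCube_sub hm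
  refine not_isBigO_card_divisors_log_pow A (.of_bound K ?_)
  filter_upwards [eventually_ge_atTop 2] with n hn
  obtain ⟨m, rfl⟩ := Nat.exists_eq_add_of_le' hn
  have hlog : 0 < log (m + 2 : ℕ) := log_pos (by exact_mod_cast hn)
  calc ‖((m + 2).divisors.card : ℝ)‖
      = ‖divisorCoeff A (m + 2)‖ * ((m : ℝ) + 2) ^ 2 * log (m + 2 : ℕ) ^ A := by
        rw [norm_divisorCoeff, norm_natCast]; push_cast at hlog ⊢; field_simp
    _ ≤ K * ‖log (m + 2 : ℕ) ^ A‖ := by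
        rw [norm_of_nonneg (by positivity)]; gcongr; exact hcoeff m

lemma e_eq_fourierChar (x : ℝ) : e x = 𝐞 x := by
  rw [e, Real.fourierChar_apply]; push_cast; ring_nf

lemma F_eq_trigSeries : F = trigSeries primeCube fun n => divisorCoeff 2023 (n + 2) := by
  ext x
  refine tsum_congr fun n => ?_
  rw [e_eq_fourierChar, Circle.smul_def, real_inner_comm]
  simp only [divisorCoeff, primeCube, RCLike.inner_apply, conj_trivial, smul_eq_mul]
  push_cast
  rw [mul_div_right_comm, mul_comm, mul_comm x]

theorem F_nowhere_Lipschitz_nowhere_differentiable :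
    ∀ x₀ : ℝ,
      (¬ ∃ C > (0:ℝ), ∃ δ > (0:ℝ), ∀ x : ℝ, |x - x₀| < δ → ‖F x - F x₀‖ ≤ C * |x - x₀|) ∧
      ¬ DifferentiableAt ℝ F x₀ := by
  intro x₀
  have hF : ¬ (F · - F x₀) =O[𝓝 x₀] (· - x₀) := by
    rw [F_eq_trigSeries]
    exact not_isBigO_trigSeries_primeCube_sub 2023 x₀
  refine ⟨?_, fun hd => hF hd.isBigO_sub⟩
  rintro ⟨C, -, δ, hδ, h⟩
  exact hF (.of_bound C (Metric.eventually_nhds_iff.2 ⟨δ, hδ, fun x hx => h x hx⟩))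
end
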